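/- arXiv:1506.07699 — 2 statements merged into one kernel-verified Lean document; each statement's English description precedes it below -/
import Mathlib

section
/- Let A, B, C be real symmetric r×r matrices such that f = det(I_r + Ax + By + Cz) is a cubic polynomial. Then there exist real symmetric 5×5 matrices A', B', C' such that f = det(I₅ + A'x + B'y + C'z). -/
open MvPolynomial

/-!
Restricting the determinant to a real line through the origin gives a reversed characteristic
polynomial, so every real combination of the coefficient matrices has rank at most the degree `d`
of the determinant. Let `T` be a combination of maximal rank and `U` one of the matrices. The
subspaces `U (ker T)` and `U (T⁻¹ (U (ker T)))` lie in `range (T + t • U)` for all real `t ≠ 0`;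
as this rank never exceeds that of `T`, letting `t → 0` puts them in `range T`. Since
`range T ⟂ ker T`, the second inclusion makes `T⁻¹ (U (ker T))` orthogonal to `U (ker T)`, whence
`dim U (ker T) ≤ d / 2`. Therefore the common kernel of the `n` matrices has codimension at most
`d + (n - 1) * ⌊d / 2⌋`, which is `5` for `d = n = 3`, and compressing the matrices to its
orthogonal complement does not change the determinant, because `det (1 + X * Y) = det (1 + Y * X)`.
-/

section

open Module

theorem eq_zero_of_sum_smul_eq_zero {K M σ : Type*} [DivisionRing K] [AddCommGroup M] [Module K M]
    [Fintype σ] {c : σ → K} {x : σ → M} {s₀ : σ} (hs₀ : c s₀ ≠ 0) (hsum : ∑ s, c s • x s = 0)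
    (hx : ∀ s ≠ s₀, x s = 0) : x s₀ = 0 := by
  rw [Fintype.sum_eq_single s₀ fun s hs ↦ by rw [hx s hs, smul_zero]] at hsum
  exact (smul_eq_zero_iff_right hs₀).mp hsum

variable {K V W σ : Type*} [DivisionRing K] [AddCommGroup V] [Module K V] [FiniteDimensional K V]
  [AddCommGroup W] [Module K W]

theorem finrank_map_add_finrank_inf_ker (f : V →ₗ[K] W) (P : Submodule K V) :
    finrank K (P.map f) + finrank K ↥(P ⊓ f.ker) = finrank K P := by
  rw [← (f.domRestrict P).finrank_range_add_finrank_ker, LinearMap.range_domRestrict,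
    LinearMap.ker_domRestrict, ← Submodule.finrank_map_subtype_eq, Submodule.map_comap_subtype]

theorem finrank_le_finrank_inf_iInf_ker_add_sum (P : Submodule K V) (f : σ → V →ₗ[K] W)
    (S : Finset σ) :
    finrank K P ≤ finrank K ↥(P ⊓ ⨅ s ∈ S, (f s).ker) + ∑ s ∈ S, finrank K (P.map (f s)) := by
  classical
  induction S using Finset.induction_on with
  | empty =>
    have hP : P ⊓ ⨅ s ∈ (∅ : Finset σ), (f s).ker = P := by simp
    rw [hP]
    exact Nat.le_add_right _ _
  | insert s S hs ih =>
    have hsplit := finrank_map_add_finrank_inf_ker (f s) (P ⊓ ⨅ s ∈ S, (f s).ker)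
    have hmono : finrank K ((P ⊓ ⨅ s ∈ S, (f s).ker).map (f s)) ≤ finrank K (P.map (f s)) :=
      Submodule.finrank_mono (Submodule.map_mono inf_le_left)
    rw [Finset.iInf_insert, Finset.sum_insert hs, inf_left_comm, inf_comm]
    lia

theorem exists_ne_zero_forall_finrank_range_sum_smul_le {𝕜 V W σ : Type*} [RCLike 𝕜]
    [AddCommGroup V] [Module 𝕜 V] [FiniteDimensional 𝕜 V] [AddCommGroup W] [Module 𝕜 W]
    [Fintype σ] [Nonempty σ] (A : σ → V →ₗ[𝕜] W) :
    ∃ c : σ → ℝ, c ≠ 0 ∧ ∀ c' : σ → ℝ, finrank 𝕜 (∑ s, (c' s : 𝕜) • A s).range ≤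
      finrank 𝕜 (∑ s, (c s : 𝕜) • A s).range := by
  let ρ (c : {c : σ → ℝ // c ≠ 0}) := finrank 𝕜 (∑ s, (c.1 s : 𝕜) • A s).range
  have hbdd : (Set.range ρ).Finite := (Set.finite_Iic (finrank 𝕜 V)).subset <|
    Set.range_subset_iff.mpr fun c ↦ LinearMap.finrank_range_le _
  obtain ⟨c₁, hc₁⟩ := exists_ne (0 : σ → ℝ)
  obtain ⟨_, ⟨c, rfl⟩, hmax⟩ := hbdd.exists_maximal ⟨_, Set.mem_range_self ⟨c₁, hc₁⟩⟩
  refine ⟨c.1, c.2, fun c' ↦ ?_⟩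
  rcases eq_or_ne c' 0 with rfl | hc'
  · have hzero : ∑ s, (((0 : σ → ℝ) s : ℝ) : 𝕜) • A s = 0 := by simp
    rw [hzero, LinearMap.range_zero, finrank_bot]
    exact Nat.zero_le _
  · exact (le_total (ρ ⟨c', hc'⟩) (ρ c)).elim id (hmax ⟨⟨c', hc'⟩, rfl⟩)

end

section

open Module Filter Topology

theorem mem_range_of_tendsto_of_finrank_range_le {𝕜 E F α : Type*} [NontriviallyNormedField 𝕜]
    [CompleteSpace 𝕜] [AddCommGroup E] [Module 𝕜 E] [FiniteDimensional 𝕜 E]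
    [NormedAddCommGroup F] [NormedSpace 𝕜 F] {l : Filter α} [l.NeBot] {S : α → E →ₗ[𝕜] F}
    {T : E →ₗ[𝕜] F} {v : F} (hS : ∀ x, Tendsto (fun a ↦ S a x) l (𝓝 (T x)))
    (hrank : ∀ᶠ a in l, finrank 𝕜 (S a).range ≤ finrank 𝕜 T.range)
    (hv : ∀ᶠ a in l, v ∈ (S a).range) : v ∈ T.range := by
  by_contra hvT
  let b := finBasis 𝕜 T.range
  choose e he using fun i ↦ (b i).2
  have hTe : LinearIndependent 𝕜 (fun i ↦ T (e i)) := by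
    simpa only [he, Function.comp_def, Submodule.subtype_apply] using
      b.linearIndependent.map' T.range.subtype (Submodule.ker_subtype _)
  have hTev : LinearIndependent 𝕜 (Fin.cons v fun i ↦ T (e i) : Fin (_ + 1) → F) :=
    linearIndependent_finCons.mpr ⟨hTe, fun h ↦ hvT <|
      Submodule.span_le.mpr (Set.range_subset_iff.mpr fun i ↦ T.mem_range_self (e i)) h⟩
  have hlim : Tendsto (fun a ↦ (Fin.cons v fun i ↦ S a (e i) : Fin (_ + 1) → F)) l
      (𝓝 (Fin.cons v fun i ↦ T (e i))) :=
    tendsto_const_nhds.finCons (tendsto_pi_nhds.mpr fun i ↦ hS (e i))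
  obtain ⟨a, hind, hle, w, hw⟩ :=
    ((hlim.eventually (isOpen_setOfPred_linearIndependent.mem_nhds hTev)).and
      (hrank.and hv)).exists
  have hspan : Submodule.span 𝕜 (Set.range (Fin.cons v fun i ↦ S a (e i))) ≤ (S a).range := by
    rw [Submodule.span_le, Fin.range_cons, Set.insert_subset_iff]
    exact ⟨⟨w, hw⟩, Set.range_subset_iff.mpr fun i ↦ ⟨e i, rfl⟩⟩
  have hcard := (finrank_span_eq_card hind).symm.trans_le (Submodule.finrank_mono hspan)
  rw [Fintype.card_fin] at hcard
  lia

variable {𝕜 E F : Type*} [RCLike 𝕜] [AddCommGroup E] [Module 𝕜 E] [FiniteDimensional 𝕜 E]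
  [NormedAddCommGroup F] [NormedSpace 𝕜 F] {T U : E →ₗ[𝕜] F}

theorem mem_range_of_forall_mem_range_add_smul
    (hrank : ∀ t : ℝ, finrank 𝕜 (T + (t : 𝕜) • U).range ≤ finrank 𝕜 T.range) {v : F}
    (hv : ∀ t : ℝ, t ≠ 0 → v ∈ (T + (t : 𝕜) • U).range) : v ∈ T.range := by
  refine mem_range_of_tendsto_of_finrank_range_le (l := 𝓝[≠] (0 : ℝ)) (fun x ↦ ?_)
    (.of_forall hrank) (eventually_mem_nhdsWithin.mono hv)
  have hcont : Continuous fun t : ℝ ↦ (T + (t : 𝕜) • U) x := by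
    simp only [LinearMap.add_apply, LinearMap.smul_apply]
    fun_prop
  simpa using (hcont.tendsto 0).mono_left nhdsWithin_le_nhds

theorem map_ker_le_range_of_finrank_range_add_smul_le
    (hrank : ∀ t : ℝ, finrank 𝕜 (T + (t : 𝕜) • U).range ≤ finrank 𝕜 T.range) :
    T.ker.map U ≤ T.range := by
  rintro _ ⟨k, hk, rfl⟩
  refine mem_range_of_forall_mem_range_add_smul hrank fun t ht ↦ ?_
  have hk : T k = 0 := hk
  exact ⟨(t : 𝕜)⁻¹ • k, by simp [hk, ht]⟩

theorem apply_mem_range_of_apply_mem_map_ker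
    (hrank : ∀ t : ℝ, finrank 𝕜 (T + (t : 𝕜) • U).range ≤ finrank 𝕜 T.range) {w : E}
    (hw : T w ∈ T.ker.map U) : U w ∈ T.range := by
  obtain ⟨k, hk, hkw⟩ := hw
  refine mem_range_of_forall_mem_range_add_smul hrank fun t ht ↦ ?_
  have hk : T k = 0 := hk
  have ht : (t : 𝕜) ≠ 0 := RCLike.ofReal_ne_zero.mpr ht
  refine ⟨(t : 𝕜)⁻¹ • w - ((t : 𝕜) ^ 2)⁻¹ • k, ?_⟩
  simp only [LinearMap.add_apply, LinearMap.smul_apply, map_sub, map_smul, hk, hkw]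
  match_scalars <;> field_simp
  ring

end

section

open Module

variable {𝕜 E : Type*} [RCLike 𝕜] [NormedAddCommGroup E] [InnerProductSpace 𝕜 E]

theorem range_le_orthogonal_iInf_ker {σ : Type*} {A : σ → E →ₗ[𝕜] E}
    (hA : ∀ s, (A s).IsSymmetric) (s : σ) : (A s).range ≤ (⨅ s, (A s).ker)ᗮ := by
  refine (Submodule.le_orthogonal_orthogonal _).trans ?_
  rw [(hA s).orthogonal_range]
  exact Submodule.orthogonal_le (iInf_le _ s)

variable [FiniteDimensional 𝕜 E]

theorem two_mul_finrank_map_ker_le_finrank_range {T U : E →ₗ[𝕜] E} (hT : T.IsSymmetric)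
    (hU : U.IsSymmetric)
    (hrank : ∀ t : ℝ, finrank 𝕜 (T + (t : 𝕜) • U).range ≤ finrank 𝕜 T.range) :
    2 * finrank 𝕜 (T.ker.map U) ≤ finrank 𝕜 T.range := by
  have horth : (T.ker.map U).comap T ≤ (T.ker.map U)ᗮ := by
    rintro w hw _ ⟨k, hk, rfl⟩
    have hUw : U w ∈ T.range := apply_mem_range_of_apply_mem_map_ker hrank hw
    have hkT : k ∈ T.rangeᗮ := hT.orthogonal_range.symm ▸ hk
    rw [hU]
    exact Submodule.inner_left_of_mem_orthogonal hUw hkT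
  have hcomap : finrank 𝕜 ((T.ker.map U).comap T) =
      finrank 𝕜 (T.ker.map U) + finrank 𝕜 T.ker := by
    rw [← finrank_map_add_finrank_inf_ker T ((T.ker.map U).comap T),
      Submodule.map_comap_eq_of_le (map_ker_le_range_of_finrank_range_add_smul_le hrank),
      inf_eq_right.mpr (LinearMap.ker_le_comap T)]
  have hle := Submodule.finrank_mono horth
  have hcompl := (T.ker.map U).finrank_add_finrank_orthogonal
  have hrangeKer := T.finrank_range_add_finrank_ker
  lia

theorem two_mul_finrank_map_ker_sum_smul_le {σ : Type*} [Fintype σ] {A : σ → E →ₗ[𝕜] E}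
    (hA : ∀ s, (A s).IsSymmetric) {c : σ → ℝ}
    (hc : ∀ c' : σ → ℝ, finrank 𝕜 (∑ s, (c' s : 𝕜) • A s).range ≤
      finrank 𝕜 (∑ s, (c s : 𝕜) • A s).range) (s : σ) :
    2 * finrank 𝕜 ((∑ s, (c s : 𝕜) • A s).ker.map (A s)) ≤
      finrank 𝕜 (∑ s, (c s : 𝕜) • A s).range := by
  classical
  have hsymm : (∑ s, (c s : 𝕜) • A s).IsSymmetric :=
    LinearMap.isSymmetric_sum _ fun s _ ↦ (hA s).smul (RCLike.conj_ofReal _)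
  have hrank (t : ℝ) : finrank 𝕜 (∑ s, (c s : 𝕜) • A s + (t : 𝕜) • A s).range ≤
      finrank 𝕜 (∑ s, (c s : 𝕜) • A s).range := by
    have hperturb : ∑ s', ((c + Pi.single s t : σ → ℝ) s' : 𝕜) • A s' =
        ∑ s', (c s' : 𝕜) • A s' + (t : 𝕜) • A s := by
      simp only [Pi.add_apply, RCLike.ofReal_add, add_smul, Finset.sum_add_distrib]
      simp [Pi.single_apply, apply_ite (RCLike.ofReal : ℝ → 𝕜)]
    have hmax := hc (c + Pi.single s t)
    rwa [hperturb] at hmax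
  exact two_mul_finrank_map_ker_le_finrank_range hsymm (hA s) hrank

theorem finrank_orthogonal_iInf_ker_le {σ : Type*} [Fintype σ] {A : σ → E →ₗ[𝕜] E}
    (hA : ∀ s, (A s).IsSymmetric) {d : ℕ}
    (hd : ∀ c : σ → ℝ, finrank 𝕜 (∑ s, (c s : 𝕜) • A s).range ≤ d) :
    finrank 𝕜 ↥(⨅ s, (A s).ker)ᗮ ≤ d + (Fintype.card σ - 1) * (d / 2) := by
  classical
  cases isEmpty_or_nonempty σ
  · rw [iInf_of_empty, Submodule.top_orthogonal_eq_bot, finrank_bot]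
    exact Nat.zero_le _
  obtain ⟨c, hc, hmax⟩ := exists_ne_zero_forall_finrank_range_sum_smul_le A
  obtain ⟨s₀, hs₀⟩ : ∃ s₀, c s₀ ≠ 0 := Function.ne_iff.mp hc
  have hmap (s : σ) : finrank 𝕜 ((∑ s, (c s : 𝕜) • A s).ker.map (A s)) ≤ d / 2 := by
    have htwo := (two_mul_finrank_map_ker_sum_smul_le hA hmax s).trans (hd c)
    lia
  have hTd := hd c
  generalize hT : ∑ s, (c s : 𝕜) • A s = T at hmap hTd
  have hker : T.ker ⊓ ⨅ s ∈ Finset.univ.erase s₀, (A s).ker ≤ ⨅ s, (A s).ker := by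
    rintro x ⟨hTx, hAx⟩
    have hne : ∀ s ≠ s₀, A s x = 0 := by simpa using hAx
    have hzero : A s₀ x = 0 := eq_zero_of_sum_smul_eq_zero (x := fun s ↦ A s x)
      (RCLike.ofReal_ne_zero.mpr hs₀ : (c s₀ : 𝕜) ≠ 0) (by simpa [← hT] using hTx) hne
    exact (Submodule.mem_iInf _).mpr fun s ↦ (eq_or_ne s s₀).elim (fun h ↦ h ▸ hzero) (hne s)
  have hcut := finrank_le_finrank_inf_iInf_ker_add_sum T.ker A (Finset.univ.erase s₀)
  have hsum : ∑ s ∈ Finset.univ.erase s₀, finrank 𝕜 (T.ker.map (A s)) ≤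
      (Fintype.card σ - 1) * (d / 2) := by
    simpa only [Finset.card_erase_of_mem (Finset.mem_univ _), Finset.card_univ, smul_eq_mul] using
      (Finset.univ.erase s₀).sum_le_card_nsmul _ _ fun s _ ↦ hmap s
  have hle := Submodule.finrank_mono hker
  have hrangeKer := T.finrank_range_add_finrank_ker
  have hcompl := (⨅ s, (A s).ker).finrank_add_finrank_orthogonal
  lia

end

/-- The monic matrix pencil `1 + ∑ s, A s * x s` with coefficient matrices `A s`, as a matrix over
`MvPolynomial σ R`; the polynomials studied here are determinants of such pencils. -/
noncomputable def monicPencil {R σ ι : Type*} [CommSemiring R] [Fintype σ] [DecidableEq ι]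
    (A : σ → Matrix ι ι R) : Matrix ι ι (MvPolynomial σ R) :=
  1 + ∑ s, (X s : MvPolynomial σ R) • (A s).map C

theorem monicPencil_fin_three {R ι : Type*} [CommSemiring R] [DecidableEq ι]
    (A : Fin 3 → Matrix ι ι R) :
    monicPencil A = 1 + (X 0 : MvPolynomial (Fin 3) R) • (A 0).map C +
      (X 1 : MvPolynomial (Fin 3) R) • (A 1).map C +
      (X 2 : MvPolynomial (Fin 3) R) • (A 2).map C := by
  simp only [monicPencil, Fin.sum_univ_three, add_assoc]

section

variable {R σ ι κ : Type*} [CommRing R] [Fintype σ] [Fintype ι] [DecidableEq ι] [Fintype κ]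
  [DecidableEq κ]

theorem charpolyRev_sum_smul_eq_aeval_det_monicPencil (A : σ → Matrix ι ι R) (c : σ → R) :
    (∑ s, c s • A s).charpolyRev =
      aeval (fun s ↦ -(Polynomial.C (c s) * Polynomial.X)) (monicPencil A).det := by
  rw [Matrix.charpolyRev, AlgHom.map_det]
  congr 1
  ext1 i j
  simp only [Matrix.sub_apply, Matrix.one_apply, Matrix.smul_apply, Matrix.map_apply,
    Matrix.sum_apply, smul_eq_mul, map_sum, map_mul, Finset.mul_sum, sub_eq_add_neg, monicPencil,
    AlgHom.mapMatrix_apply, Matrix.add_apply, map_add, aeval_X, algHom_C,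
    Polynomial.algebraMap_eq, neg_mul, Finset.sum_neg_distrib, map_one, add_right_inj, neg_inj]
  exact Finset.sum_congr rfl fun s _ ↦ by ring

theorem det_monicPencil_mul_mul {A : σ → Matrix ι ι R} {G : Matrix ι κ R} {H : Matrix κ ι R}
    (hA : ∀ s, G * H * A s = A s) :
    (monicPencil fun s ↦ H * A s * G).det = (monicPencil A).det := by
  have hfactor : (monicPencil fun s ↦ H * A s * G) =
      1 + (H.map (C (σ := σ)) * ∑ s, (X s : MvPolynomial σ R) • (A s).map (C (σ := σ))) *
        G.map (C (σ := σ)) := by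
    simp only [monicPencil, Matrix.map_mul, Matrix.mul_sum, Matrix.sum_mul,
      Matrix.mul_smul, Matrix.smul_mul]
  rw [hfactor, Matrix.det_one_add_mul_comm, ← Matrix.mul_assoc, ← Matrix.map_mul, Matrix.mul_sum]
  simp only [Matrix.mul_smul, ← Matrix.map_mul, hA, monicPencil]

end

section

open Module Matrix

variable {𝕜 σ ι κ : Type*} [RCLike 𝕜] [Fintype ι] [Fintype κ]

theorem exists_mul_conjTranspose_mulVec_eq_self {W : Submodule 𝕜 (EuclideanSpace 𝕜 ι)}
    (hW : finrank 𝕜 W ≤ Fintype.card κ) :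
    ∃ G : Matrix ι κ 𝕜, ∀ w ∈ W, (G * Gᴴ) *ᵥ w.ofLp = w.ofLp := by
  classical
  let b := stdOrthonormalBasis 𝕜 W
  obtain ⟨f⟩ : Nonempty (Fin (finrank 𝕜 W) ↪ κ) :=
    Function.Embedding.nonempty_of_card_le (by simpa using hW)
  let B : Matrix ι (Fin (finrank 𝕜 W)) 𝕜 := .of fun a i ↦ (b i : EuclideanSpace 𝕜 ι) a
  let J : Matrix (Fin (finrank 𝕜 W)) κ 𝕜 := (1 : Matrix κ κ 𝕜).submatrix f id
  have hJ : J * Jᴴ = 1 := by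
    rw [Matrix.conjTranspose_submatrix, ← Matrix.submatrix_mul _ _ _ _ _ Function.bijective_id]
    simp
  refine ⟨B * J, fun w hw ↦ ?_⟩
  rw [conjTranspose_mul, Matrix.mul_assoc, ← Matrix.mul_assoc J, hJ, Matrix.one_mul,
    ← mulVec_mulVec]
  have hexp := congrArg (fun v : W ↦ (v : EuclideanSpace 𝕜 ι).ofLp) (b.sum_repr' ⟨w, hw⟩)
  ext a
  rw [← congrFun hexp a]
  simp [mulVec, dotProduct, B, PiLp.inner_apply, mul_comm]

variable [Fintype σ] [DecidableEq ι] [DecidableEq κ]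

theorem natDegree_charpolyRev_of_isHermitian {S : Matrix ι ι 𝕜} (hS : S.IsHermitian) :
    S.charpolyRev.natDegree = S.rank := by
  rw [← Matrix.reverse_charpoly, Polynomial.reverse_natDegree, Matrix.charpoly_natDegree_eq_dim,
    ← Polynomial.rootMultiplicity_eq_natTrailingDegree', ← Polynomial.count_roots,
    hS.roots_charpoly_eq_eigenvalues, hS.rank_eq_card_non_zero_eigs, Fintype.card_subtype_compl,
    Multiset.count_map, Fintype.card_subtype]
  simp [eq_comm (a := (0 : 𝕜)), Finset.card]

theorem finrank_range_toEuclideanLin (S : Matrix ι ι 𝕜) :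
    finrank 𝕜 S.toEuclideanLin.range = S.rank := by
  rw [toEuclideanLin, Matrix.toLpLin_eq_toLin, ← Matrix.rank_eq_finrank_range_toLin]

theorem rank_sum_smul_le_totalDegree_det_monicPencil {A : σ → Matrix ι ι 𝕜}
    (hA : ∀ s, (A s).IsHermitian) (c : σ → ℝ) :
    (∑ s, (c s : 𝕜) • A s).rank ≤ (monicPencil A).det.totalDegree := by
  have hherm : (∑ s, (c s : 𝕜) • A s).IsHermitian := by
    simp [Matrix.IsHermitian, Matrix.conjTranspose_sum, (hA _).eq]
  rw [← natDegree_charpolyRev_of_isHermitian hherm, charpolyRev_sum_smul_eq_aeval_det_monicPencil,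
    ← mul_one (totalDegree _)]
  refine aeval_natDegree_le _ le_rfl _ fun s ↦ ?_
  rw [Polynomial.natDegree_neg]
  exact (Polynomial.natDegree_C_mul_le _ _).trans Polynomial.natDegree_X_le

theorem stmt_16_general {A : σ → Matrix ι ι 𝕜} (hA : ∀ s, (A s).IsHermitian) {d : ℕ}
    (hdeg : (monicPencil A).det.totalDegree ≤ d)
    (hκ : d + (Fintype.card σ - 1) * (d / 2) ≤ Fintype.card κ) :
    ∃ A' : σ → Matrix κ κ 𝕜, (∀ s, (A' s).IsHermitian) ∧
      (monicPencil A').det = (monicPencil A).det := by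
  have hsymm (s : σ) : (A s).toEuclideanLin.IsSymmetric :=
    isSymmetric_toEuclideanLin_iff.mpr (hA s)
  have hrank (c : σ → ℝ) : finrank 𝕜 (∑ s, (c s : 𝕜) • (A s).toEuclideanLin).range ≤ d := by
    have hsum : ∑ s, (c s : 𝕜) • (A s).toEuclideanLin =
        (∑ s, (c s : 𝕜) • A s).toEuclideanLin := by simp only [map_sum, map_smul]
    rw [hsum, finrank_range_toEuclideanLin]
    exact (rank_sum_smul_le_totalDegree_det_monicPencil hA c).trans hdeg
  obtain ⟨G, hG⟩ := exists_mul_conjTranspose_mulVec_eq_self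
    ((finrank_orthogonal_iInf_ker_le hsymm hrank).trans hκ)
  have hGA (s : σ) : G * Gᴴ * A s = A s := by
    refine ext_of_mulVec_single fun i ↦ ?_
    rw [← mulVec_mulVec]
    exact hG _ <| range_le_orthogonal_iInf_ker hsymm s <|
      LinearMap.mem_range_self _ (EuclideanSpace.single i 1)
  exact ⟨fun s ↦ Gᴴ * A s * G, fun s ↦ isHermitian_conjTranspose_mul_mul G (hA s),
    det_monicPencil_mul_mul hGA⟩

end

/-- a cubic of the form `det(I_r + Ax + By + Cz)` with real symmetric
matrices can be rewritten with matrices of size 5. -/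
theorem stmt_16 (r : ℕ) (A B C' : Matrix (Fin r) (Fin r) ℝ)
    (hA : A.IsSymm) (hB : B.IsSymm) (hC : C'.IsSymm)
    (f : MvPolynomial (Fin 3) ℝ)
    (hf : f = ((1 : Matrix (Fin r) (Fin r) (MvPolynomial (Fin 3) ℝ))
        + (X 0 : MvPolynomial (Fin 3) ℝ) • A.map C
        + (X 1 : MvPolynomial (Fin 3) ℝ) • B.map C
        + (X 2 : MvPolynomial (Fin 3) ℝ) • C'.map C).det)
    (hdeg : f.totalDegree = 3) :
    ∃ A' B' C'' : Matrix (Fin 5) (Fin 5) ℝ, A'.IsSymm ∧ B'.IsSymm ∧ C''.IsSymm ∧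
      f = ((1 : Matrix (Fin 5) (Fin 5) (MvPolynomial (Fin 3) ℝ))
        + (X 0 : MvPolynomial (Fin 3) ℝ) • A'.map C
        + (X 1 : MvPolynomial (Fin 3) ℝ) • B'.map C
        + (X 2 : MvPolynomial (Fin 3) ℝ) • C''.map C).det := by
  subst hf
  obtain ⟨A', hA', hdet⟩ := stmt_16_general (κ := Fin 5) (A := ![A, B, C'])
    (by simp [Fin.forall_fin_succ, hA, hB, hC]) (monicPencil_fin_three ![A, B, C'] ▸ hdeg.le)
    (by simp)
  simp only [monicPencil_fin_three] at hdet
  exact ⟨A' 0, A' 1, A' 2, hA' 0, hA' 1, hA' 2, hdet.symm⟩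
end

section
/- Let f be a cubic polynomial in ℝ[x,y,z] whose homogenization defines a smooth surface in ℙ³(ℂ), and suppose there are no real symmetric 4×4 matrices realizing the set {f ≥ 0 containing a given interior point} as a spectrahedron via l·f^h = det of a symmetric pencil. Concretely: there is no linear form l ∈ ℝ[w,x,y,z] and real symmetric 4×4 matrices A₀,…,A₃, with A₀ positive definite after normalization, such that l(w,x,y,z)·f^h(w,x,y,z) = det(A₀w + A₁x + A₂y + A₃z). -/
open MvPolynomial

/-!
Suppose `l * F = det (∑ i, x i • A i)`. After a congruence and a rescaling of `l`, some real point
`e` satisfies `∑ k, e k • A k = 1` and `l(e) = 1`. Then `A(p) - l(p) • 1 = A(p - l(p) • e)` has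
determinant zero for every real `p`, because `l` vanishes at `p - l(p) • e`. So the matrices
`A k - l k • 1` span a space `S` of singular symmetric `4 × 4` matrices. Either all adjugates vanish
on `S`, or, after an orthogonal change of basis, one of two shapes occurs:

* the first row of `S` vanishes: then `F` is a symmetric `3 × 3` determinant of linear forms, and it
  is singular where that matrix takes a value of the form `v vᵀ` (a node of Cayley's symmetroid);
* the first two rows of `S` are supported in one common column: then `F = c * q - l * d ^ 2` with
  linear forms `c`, `d` and a quadratic form `q`, and it is singular where `c = d = q = 0`.

If all adjugates vanish on `S`, then `l ^ 2` divides `l * F`, so `F = l * Q` is singular where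
`l = Q = 0`.

The classification of `S` starts from `M ∈ S` of rank three with kernel vector `k`. Expanding the
kernel of `M + t N` in powers of `t` shows that the preimages under `M` of the vectors `N k`,
`N ∈ S`, are isotropic for `M`, which forces these vectors `N k` onto a single line.
-/

section SingularPoints

variable {σ R K : Type*} [CommRing R] [CommRing K] [Algebra R K]

/-- The hypersurface `F = 0` is singular at the point with coordinates `p`: both `F` and its
gradient vanish there. -/
def IsSingularAt (F : MvPolynomial σ R) (p : σ → K) : Prop :=
  aeval p F = 0 ∧ ∀ i, aeval p (pderiv i F) = 0

namespace IsSingularAt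

variable {F G : MvPolynomial σ R} {p : σ → K}

theorem sub (hF : IsSingularAt F p) (hG : IsSingularAt G p) : IsSingularAt (F - G) p :=
  ⟨by rw [map_sub, hF.1, hG.1, sub_zero],
    fun i => by rw [map_sub, map_sub, hF.2, hG.2, sub_zero]⟩

theorem mul_left (G : MvPolynomial σ R) (hF : IsSingularAt F p) : IsSingularAt (G * F) p :=
  ⟨by rw [map_mul, hF.1, mul_zero], fun i => by simp [hF.1, hF.2 i]⟩

theorem mul_of_aeval_eq_zero (hF : aeval p F = 0) (hG : aeval p G = 0) :
    IsSingularAt (F * G) p :=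
  ⟨by rw [map_mul, hF, zero_mul], fun i => by simp [hF, hG]⟩

theorem of_C_mul {k : Type*} [Field k] [Algebra k K] {c : k} (hc : c ≠ 0)
    {F : MvPolynomial σ k} (hF : IsSingularAt (C c * F) p) : IsSingularAt F p := by
  have hscaled := hF.mul_left (C c⁻¹)
  rwa [← mul_assoc, ← C_mul, inv_mul_cancel₀ hc, C_1, one_mul] at hscaled

end IsSingularAt

theorem isSingularAt_det_fin_three {M : Matrix (Fin 3) (Fin 3) (MvPolynomial σ R)} {p : σ → K}
    {v : Fin 3 → K} (hM : ∀ i j, aeval p (M i j) = v i * v j) : IsSingularAt M.det p := by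
  constructor
  · simp only [Matrix.det_fin_three, map_sub, map_add, map_mul, hM]
    ring
  · intro i
    simp only [Matrix.det_fin_three, map_sub, map_add, map_mul, pderiv_mul, hM]
    ring

end SingularPoints

section Pencils

variable {σ n R : Type*} [Fintype σ] [CommRing R]

/-- The linear form `∑ i, l i * x i` with coefficients `l`. -/
noncomputable def linForm (l : σ → R) : MvPolynomial σ R := ∑ i, C (l i) * X i

/-- The linear matrix pencil `∑ i, x i • A i`, a matrix of linear forms. -/
noncomputable def pencil (A : σ → Matrix n n R) : Matrix n n (MvPolynomial σ R) :=
  ∑ i, (X i : MvPolynomial σ R) • (A i).map C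

theorem linForm_zero : linForm (0 : σ → R) = 0 := by
  simp [linForm]

theorem linForm_sub (l m : σ → R) : (linForm fun i => l i - m i) = linForm l - linForm m := by
  simp only [linForm, C_sub, sub_mul, Finset.sum_sub_distrib]

theorem linForm_smul (c : R) (l : σ → R) : linForm (c • l) = C c * linForm l := by
  simp only [linForm, Pi.smul_apply, smul_eq_mul, C_mul, mul_assoc, Finset.mul_sum]

theorem aeval_linForm {K : Type*} [CommRing K] [Algebra R K] (p : σ → K) (l : σ → R) :
    aeval p (linForm l) = ∑ i, algebraMap R K (l i) * p i := by
  simp [linForm]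

theorem eval_linForm (p l : σ → R) : eval p (linForm l) = l ⬝ᵥ p := by
  simp [linForm, dotProduct]

theorem isHomogeneous_linForm (l : σ → R) : (linForm l).IsHomogeneous 1 :=
  IsHomogeneous.sum _ _ _ fun i _ => isHomogeneous_C_mul_X (l i) i

theorem pencil_apply (A : σ → Matrix n n R) (i j : n) :
    pencil A i j = linForm fun k => A k i j := by
  simp [pencil, linForm, Matrix.sum_apply, mul_comm]

theorem isHomogeneous_pencil_apply (A : σ → Matrix n n R) (i j : n) :
    (pencil A i j).IsHomogeneous 1 := by
  rw [pencil_apply]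
  exact isHomogeneous_linForm _

theorem pencil_isSymm {A : σ → Matrix n n R} (hA : ∀ k, (A k).IsSymm) : (pencil A).IsSymm :=
  Matrix.IsSymm.ext fun i j => by simp only [pencil_apply, (hA _).apply i j]

theorem submatrix_pencil {m : Type*} (A : σ → Matrix n n R) (f : m → n) :
    (pencil A).submatrix f f = pencil fun k => (A k).submatrix f f := by
  ext1 i j
  simp only [Matrix.submatrix_apply, pencil_apply]

theorem pencil_sub_smul_one [DecidableEq n] (A : σ → Matrix n n R) (l : σ → R) :
    (pencil fun k => A k - l k • 1) = pencil A - linForm l • 1 := by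
  ext1 i j
  rcases eq_or_ne i j with rfl | hij
  · simpa [pencil_apply] using linForm_sub (fun k => A k i i) l
  · simp [pencil_apply, hij]

theorem pencil_apply_of_sub_smul_one_eq_zero [DecidableEq n] {A : σ → Matrix n n R} {l : σ → R}
    {i j : n} (hA : ∀ k, (A k - l k • 1) i j = 0) :
    pencil A i j = linForm l * (1 : Matrix n n (MvPolynomial σ R)) i j := by
  have hentry := congrFun₂ (pencil_sub_smul_one A l) i j
  rw [pencil_apply, funext hA, Matrix.sub_apply, Matrix.smul_apply, smul_eq_mul] at hentry
  exact sub_eq_zero.1 (hentry.symm.trans linForm_zero)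

theorem map_eval_pencil (p : σ → R) (A : σ → Matrix n n R) :
    (pencil A).map (eval p) = ∑ k, p k • A k := by
  ext i j
  simp [pencil_apply, eval_linForm, dotProduct, Matrix.sum_apply, mul_comm]

variable [Fintype n]

theorem pencil_conj (A : σ → Matrix n n R) (P : Matrix n n R) :
    (pencil fun k => P.transpose * A k * P) = (P.map C).transpose * pencil A * P.map C := by
  simp only [pencil, Matrix.map_mul, Matrix.transpose_map, Matrix.mul_sum, Matrix.sum_mul,
    Matrix.mul_smul, Matrix.smul_mul]

variable [DecidableEq n]

theorem eval_det_pencil (p : σ → R) (A : σ → Matrix n n R) :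
    eval p (pencil A).det = (∑ k, p k • A k).det := by
  rw [RingHom.map_det, RingHom.mapMatrix_apply, map_eval_pencil]

theorem det_pencil_conj (A : σ → Matrix n n R) (P : Matrix n n R) :
    (pencil fun k => P.transpose * A k * P).det = C (P.det ^ 2) * (pencil A).det := by
  have hP : (P.map C).det = C (σ := σ) P.det := (RingHom.map_det C P).symm
  rw [pencil_conj, Matrix.det_mul, Matrix.det_mul, Matrix.det_transpose, hP, C_pow]
  ring

theorem det_pencil_eq_zero [IsDomain R] [Infinite R] {A : σ → Matrix n n R}
    (hA : ∀ p : σ → R, (∑ k, p k • A k).det = 0) : (pencil A).det = 0 :=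
  MvPolynomial.funext fun p => by rw [eval_det_pencil, hA, map_zero]

theorem adjugate_pencil_eq_zero [IsDomain R] [Infinite R] {A : σ → Matrix n n R}
    (hA : ∀ p : σ → R, (∑ k, p k • A k).adjugate = 0) : (pencil A).adjugate = 0 := by
  ext1 i j
  refine MvPolynomial.funext fun p => ?_
  rw [← Matrix.map_apply (f := eval p), ← RingHom.mapMatrix_apply, RingHom.map_adjugate,
    RingHom.mapMatrix_apply, map_eval_pencil, hA, Matrix.zero_apply, Matrix.zero_apply, map_zero]

end Pencils

section ProjectivePoints

open Module

variable {K V : Type*} [Field K] [IsAlgClosed K] [AddCommGroup V] [Module K V]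

theorem exists_ne_zero_apply_eq_zero (hV : 1 < finrank K V) {f : V → K} {d : ℕ} (hd : d ≠ 0)
    (hsmul : ∀ (c : K) (v : V), f (c • v) = c ^ d * f v)
    (hline : ∀ u v : V, ∃ g : Polynomial K, ∀ t : K, f (u + t • v) = g.eval t) :
    ∃ v ≠ 0, f v = 0 := by
  have : Nontrivial V := nontrivial_of_finrank_pos (zero_lt_one.trans hV)
  obtain ⟨v, hv⟩ := exists_ne (0 : V)
  obtain ⟨u, hvu⟩ := exists_linearIndependent_pair_of_one_lt_finrank hV hv
  obtain ⟨g, hg⟩ := hline u v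
  by_cases hdeg : g.degree = 0
  · obtain ⟨h, hh⟩ := hline v u
    have hconst : ∀ t : K, f (u + t • v) = g.coeff 0 := fun t => by
      rw [hg, Polynomial.eq_C_of_degree_eq_zero hdeg, Polynomial.eval_C, Polynomial.coeff_C_zero]
    have heval : ∀ s ∈ ({0}ᶜ : Set K),
        h.eval s = (Polynomial.C (g.coeff 0) * Polynomial.X ^ d).eval s := fun s hs => by
      have hfactor : v + s • u = s • (u + s⁻¹ • v) := by
        rw [smul_add, smul_inv_smul₀ hs, add_comm]
      rw [← hh, hfactor, hsmul, hconst]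
      rw [Polynomial.eval_mul, Polynomial.eval_C, Polynomial.eval_pow, Polynomial.eval_X, mul_comm]
    have hpoly : h = Polynomial.C (g.coeff 0) * Polynomial.X ^ d :=
      Polynomial.eq_of_infinite_eval_eq _ _
        ((Set.finite_singleton (0 : K)).infinite_compl.mono heval)
    refine ⟨v, hv, ?_⟩
    simpa [hpoly, hd] using hh 0
  · obtain ⟨t, ht⟩ := IsAlgClosed.exists_root g hdeg
    refine ⟨u + t • v, fun h0 => ?_, (hg t).trans ht⟩
    have := LinearIndependent.pair_iff.1 hvu t 1 (by rw [one_smul, add_comm, h0])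
    exact one_ne_zero this.2

theorem aeval_smul_of_isHomogeneous {σ R A : Type*} [CommSemiring R] [CommSemiring A]
    [Algebra R A] {Q : MvPolynomial σ R} {d : ℕ} (hQ : Q.IsHomogeneous d) (c : A) (p : σ → A) :
    aeval (c • p) Q = c ^ d * aeval p Q := by
  simp only [aeval_def, eval₂_eq, Finset.mul_sum]
  refine Finset.sum_congr rfl fun m hm => ?_
  have hdeg : ∑ i ∈ m.support, m i = d := by
    simpa [Finsupp.weight_apply, Finsupp.sum] using hQ (mem_support_iff.1 hm)
  simp only [Pi.smul_apply, smul_eq_mul, mul_pow, Finset.prod_mul_distrib,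
    Finset.prod_pow_eq_pow_sum, hdeg]
  ring

theorem aeval_add_smul_eq_eval {σ R A : Type*} [CommSemiring R] [CommSemiring A] [Algebra R A]
    (Q : MvPolynomial σ R) (u v : σ → A) (t : A) :
    aeval (u + t • v) Q =
      (aeval (fun i => Polynomial.C (u i) + Polynomial.C (v i) * Polynomial.X) Q).eval t := by
  induction Q using MvPolynomial.induction_on with
  | C r => simp [Polynomial.algebraMap_apply]
  | add P Q hP hQ => simp only [map_add, hP, hQ, Polynomial.eval_add]
  | mul_X P i hP => simp [hP, mul_comm t]

theorem exists_ne_zero_aeval_eq_zero_of_linForm {σ ι R : Type*} [Fintype σ] [Fintype ι]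
    [CommRing R] [Algebra R K] {Q : MvPolynomial σ R} {d : ℕ} (hd : d ≠ 0)
    (hQ : Q.IsHomogeneous d) (L : ι → σ → R) (hcard : Fintype.card ι + 1 < Fintype.card σ) :
    ∃ p : σ → K, p ≠ 0 ∧ (∀ i, aeval p (linForm (L i)) = 0) ∧ aeval p Q = 0 := by
  let φ : (σ → K) →ₗ[K] ι → K := (Matrix.of fun i j => algebraMap R K (L i j)).mulVecLin
  have hker : 1 < finrank K (LinearMap.ker φ) := by
    have hrange : finrank K (LinearMap.range φ) ≤ Fintype.card ι :=
      (LinearMap.range φ).finrank_le.trans_eq (finrank_fintype_fun_eq_card K)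
    have hnullity := φ.finrank_range_add_finrank_ker
    rw [finrank_fintype_fun_eq_card] at hnullity
    lia
  obtain ⟨⟨p, hφp⟩, hp0, hp⟩ := exists_ne_zero_apply_eq_zero hker
    (f := fun p => aeval (p : σ → K) Q) hd
    (fun c p => aeval_smul_of_isHomogeneous hQ c (p : σ → K))
    (fun u v => ⟨_, aeval_add_smul_eq_eval Q (u : σ → K) (v : σ → K)⟩)
  refine ⟨p, by simpa using hp0, fun i => ?_, hp⟩
  rw [aeval_linForm]
  exact congrFun hφp i

theorem exists_ne_zero_apply_self_eq_zero (hV : 1 < finrank K V) (B : LinearMap.BilinForm K V) :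
    ∃ v ≠ 0, B v v = 0 := by
  refine exists_ne_zero_apply_eq_zero hV (f := fun v => B v v) two_ne_zero
    (fun c v => by simp [sq, mul_assoc]) fun u v =>
    ⟨.C (B u u) + .C (B u v + B v u) * .X + .C (B v v) * .X ^ 2, fun t => ?_⟩
  simp only [map_add, map_smul, LinearMap.add_apply, LinearMap.smul_apply, smul_eq_mul,
    Polynomial.eval_add, Polynomial.eval_C, Polynomial.eval_mul, Polynomial.eval_X,
    Polynomial.eval_pow]
  ring

theorem exists_common_isotropic_of_ker {R : LinearMap.BilinForm K V} (hR : R.IsSymm) {k : V}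
    (hk : k ≠ 0) (hRk : R k = 0) (B : LinearMap.BilinForm K V) (hV : 2 < finrank K V) :
    ∃ v ≠ 0, R v v = 0 ∧ B v v = 0 := by
  have : FiniteDimensional K V := .of_finrank_pos (by lia)
  obtain ⟨W, hW⟩ := (K ∙ k).exists_isCompl
  have hWdim : 1 < finrank K W := by
    have := Submodule.finrank_add_eq_of_isCompl hW
    rw [finrank_span_singleton hk] at this
    lia
  obtain ⟨⟨m, hmW⟩, hm0, hRm⟩ := exists_ne_zero_apply_self_eq_zero hWdim (R.restrict W)
  have hkm : LinearIndependent K ![k, m] :=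
    (LinearIndependent.pair_iff' hk).2 fun a ha => hm0 <| by
      have : m ∈ (K ∙ k) ⊓ W :=
        ⟨ha ▸ Submodule.smul_mem _ a (Submodule.mem_span_singleton_self k), hmW⟩
      simpa [hW.inf_eq_bot] using this
  obtain ⟨⟨v, hv⟩, hv0, hBv⟩ := exists_ne_zero_apply_self_eq_zero
    (V := Submodule.span K (Set.range ![k, m])) (by simp [finrank_span_eq_card hkm])
    (B.restrict _)
  refine ⟨v, by simpa using hv0, ?_, hBv⟩
  obtain ⟨a, b, rfl⟩ : ∃ a b : K, a • m + b • k = v := by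
    simpa [Submodule.mem_span_pair] using hv
  have hRmk : R m k = 0 := by rw [hR.eq, hRk, LinearMap.zero_apply]
  have hRmm : R m m = 0 := hRm
  simp [hRk, hRmk, hRmm]

theorem exists_common_isotropic {B B' : LinearMap.BilinForm K V} (hB : B.IsSymm)
    (hB' : B'.IsSymm) (hV : 2 < finrank K V) : ∃ v ≠ 0, B v v = 0 ∧ B' v v = 0 := by
  have : FiniteDimensional K V := .of_finrank_pos (by lia)
  have : Nontrivial V := nontrivial_of_finrank_pos (R := K) (by lia)
  by_cases hker : LinearMap.ker B' = ⊥
  · let e := LinearEquiv.ofInjectiveOfFinrankEq B' (LinearMap.ker_eq_bot.1 hker)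
      (Subspace.dual_finrank_eq).symm
    obtain ⟨μ, hμ⟩ := Module.End.exists_eigenvalue (e.symm.toLinearMap ∘ₗ B)
    obtain ⟨k, hk⟩ := hμ.exists_hasEigenvector
    have hBk : (B - μ • B') k = 0 := by
      have hek : B k = e (μ • k) := by
        rw [← hk.apply_eq_smul]
        exact (e.apply_symm_apply (B k)).symm
      rw [LinearMap.sub_apply, LinearMap.smul_apply, sub_eq_zero, hek, map_smul]
      rfl
    obtain ⟨v, hv0, hRv, hB'v⟩ :=
      exists_common_isotropic_of_ker (hB.sub (hB'.smul μ)) hk.2 hBk B' hV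
    exact ⟨v, hv0, by simpa [hB'v] using hRv, hB'v⟩
  · obtain ⟨k, hk, hk0⟩ := (Submodule.ne_bot_iff _).1 hker
    obtain ⟨v, hv0, hB'v, hBv⟩ := exists_common_isotropic_of_ker hB' hk0 hk B hV
    exact ⟨v, hv0, hBv, hB'v⟩

end ProjectivePoints

section Veronese

open Module Matrix

variable {K V : Type*} [Field K] [IsAlgClosed K] [AddCommGroup V] [Module K V]

theorem exists_ne_zero_apply_self_eq_zero_of_finrank_le_two {N : Type*} [AddCommGroup N]
    [Module K N] [FiniteDimensional K N] (hN : finrank K N ≤ 2) (hV : 2 < finrank K V)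
    {B : V →ₗ[K] V →ₗ[K] N} (hB : ∀ u v, B u v = B v u) : ∃ v ≠ 0, B v v = 0 := by
  obtain ⟨φ, hφ⟩ : ∃ φ : N →ₗ[K] Fin 2 → K, Function.Injective φ :=
    finrank_le_iff_exists_linearMap.1 (by simpa using hN)
  obtain ⟨v, hv0, h0, h1⟩ := exists_common_isotropic
    (B := B.compr₂ (LinearMap.proj 0 ∘ₗ φ)) (B' := B.compr₂ (LinearMap.proj 1 ∘ₗ φ))
    ⟨fun u v => by simp [hB u v]⟩ ⟨fun u v => by simp [hB u v]⟩ hV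
  refine ⟨v, hv0, hφ ?_⟩
  ext i
  fin_cases i
  · simpa using h0
  · simpa using h1

-- Symmetric `3 × 3` matrices form a six-dimensional space, so the range of `T` is cut out by at
-- most two linear equations; restricted to the matrices `v vᵀ` these are two conics.
theorem exists_apply_eq_vecMulVec (h2 : (2 : K) ≠ 0) (hV : 3 < finrank K V)
    {T : V →ₗ[K] Matrix (Fin 3) (Fin 3) K} (hT : ∀ p, (T p).IsSymm) :
    ∃ p ≠ 0, ∃ v, T p = vecMulVec v v := by
  have : FiniteDimensional K V := .of_finrank_pos (by lia)
  let π : Matrix (Fin 3) (Fin 3) K →ₗ[K] ({ij : Fin 3 × Fin 3 // ij.1 ≤ ij.2} → K) :=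
    LinearMap.pi fun ij => entryLinearMap K K ij.1.1 ij.1.2
  have hπ : ∀ M N : Matrix (Fin 3) (Fin 3) K, M.IsSymm → N.IsSymm → π M = π N → M = N :=
    fun M N hM hN hMN => by
      have hle : ∀ i j, i ≤ j → M i j = N i j := fun i j hij => congrFun hMN ⟨(i, j), hij⟩
      ext i j
      rcases le_total i j with hij | hji
      · exact hle i j hij
      · rw [← hM.apply i j, ← hN.apply i j, hle j i hji]
  by_cases hinj : LinearMap.ker (π ∘ₗ T) = ⊥
  · have hN : finrank K (_ ⧸ LinearMap.range (π ∘ₗ T)) ≤ 2 := by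
      have hrange := LinearMap.finrank_range_of_inj (LinearMap.ker_eq_bot.1 hinj)
      have hquot := (LinearMap.range (π ∘ₗ T)).finrank_quotient_add_finrank
      rw [finrank_fintype_fun_eq_card,
        show Fintype.card {ij : Fin 3 × Fin 3 // ij.1 ≤ ij.2} = 6 from rfl] at hquot
      lia
    let B := (vecMulVecBilin K K (m := Fin 3) (n := Fin 3)).compr₂
      ((LinearMap.range (π ∘ₗ T)).mkQ ∘ₗ π)
    obtain ⟨v, hv0, hv⟩ := exists_ne_zero_apply_self_eq_zero_of_finrank_le_two hN
      (by simp) (B := B + B.flip) fun u v => by simp [add_comm]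
    have hmem : π (vecMulVec v v) ∈ LinearMap.range (π ∘ₗ T) := by
      have : (2 : K) • B v v = 0 := by rw [two_smul]; exact hv
      exact (Submodule.Quotient.mk_eq_zero _).1 ((smul_eq_zero_iff_right h2).1 this)
    obtain ⟨p, hp⟩ := hmem
    have hTp : T p = vecMulVec v v := hπ _ _ (hT p) (transpose_vecMulVec v v) hp
    refine ⟨p, ?_, v, hTp⟩
    rintro rfl
    rw [map_zero, eq_comm, vecMulVec_eq_zero, or_self] at hTp
    exact hv0 hTp
  · obtain ⟨p, hp, hp0⟩ := (Submodule.ne_bot_iff _).1 hinj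
    exact ⟨p, hp0, 0, hπ _ _ (hT p) (transpose_vecMulVec 0 0) (by simpa using hp)⟩

theorem exists_isSingularAt_det_pencil_fin_three {σ R : Type*} [Fintype σ] [CommRing R]
    [Algebra R K] (h2 : (2 : K) ≠ 0) (hσ : 3 < Fintype.card σ)
    {A : σ → Matrix (Fin 3) (Fin 3) R} (hA : ∀ k, (A k).IsSymm) :
    ∃ p : σ → K, p ≠ 0 ∧ IsSingularAt (pencil A).det p := by
  let T : (σ → K) →ₗ[K] Matrix (Fin 3) (Fin 3) K :=
    Fintype.linearCombination K fun k => (A k).map (algebraMap R K)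
  have hTapply : ∀ p i j, T p i j = aeval p (pencil A i j) := fun p i j => by
    simp [T, Fintype.linearCombination_apply, pencil_apply, aeval_linForm, Matrix.sum_apply,
      mul_comm]
  have hT : ∀ p, (T p).IsSymm := fun p => IsSymm.ext fun i j => by
    rw [hTapply, hTapply, (pencil_isSymm hA).apply]
  obtain ⟨p, hp0, v, hv⟩ := exists_apply_eq_vecMulVec h2 (by simpa using hσ) hT
  exact ⟨p, hp0, isSingularAt_det_fin_three fun i j => by rw [← hTapply, hv, vecMulVec_apply]⟩

end Veronese

section SingularSpaces

open Module Matrix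

theorem finrank_comap_of_le_range {K V W : Type*} [DivisionRing K] [AddCommGroup V] [Module K V]
    [AddCommGroup W] [Module K W] [FiniteDimensional K V] {f : V →ₗ[K] W} {L : Submodule K W}
    (hL : L ≤ LinearMap.range f) :
    finrank K (L.comap f) = finrank K L + finrank K (LinearMap.ker f) := by
  have hrange : LinearMap.range (f.domRestrict (L.comap f)) = L := by
    rw [LinearMap.range_domRestrict, Submodule.map_comap_eq_self hL]
  have hker :
      finrank K (LinearMap.ker (f.domRestrict (L.comap f))) = finrank K (LinearMap.ker f) := by
    rw [LinearMap.ker_domRestrict]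
    exact (Submodule.comapSubtypeEquivOfLe (LinearMap.ker_le_comap f)).finrank_eq
  rw [← (f.domRestrict (L.comap f)).finrank_range_add_finrank_ker, hrange, hker]

theorem dotProduct_mulVec_comm_of_isSymm {n R : Type*} [Fintype n] [CommSemiring R]
    {M : Matrix n n R} (hM : M.IsSymm) (u v : n → R) : u ⬝ᵥ M *ᵥ v = M *ᵥ u ⬝ᵥ v := by
  rw [dotProduct_mulVec, ← mulVec_transpose, hM]

theorem two_mul_finrank_le_of_isotropic {n K : Type*} [Fintype n] [Field K] [CharZero K]
    {M : Matrix n n K} (hM : M.IsSymm) {U : Submodule K (n → K)} (hU : ∀ u ∈ U, u ⬝ᵥ M *ᵥ u = 0) :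
    2 * finrank K U ≤ Fintype.card n + finrank K (LinearMap.ker M.mulVecLin) := by
  classical
  have horth : U ≤ M.toBilin'.orthogonal U := fun u hu v hv => by
    have hpolar := hU (u + v) (U.add_mem hu hv)
    rw [mulVec_add, add_dotProduct, dotProduct_add, dotProduct_add, hU u hu, hU v hv,
      dotProduct_mulVec_comm_of_isSymm hM u v, dotProduct_comm _ v, zero_add, add_zero,
      add_self_eq_zero] at hpolar
    rwa [toBilin'_apply']
  have hradical : U ⊓ M.toBilin'.ker ≤ LinearMap.ker M.mulVecLin := by
    rintro v ⟨-, hv⟩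
    refine LinearMap.mem_ker.2 (dotProduct_eq_zero _ fun u => ?_)
    rw [mulVecLin_apply, ← dotProduct_mulVec_comm_of_isSymm hM, ← toBilin'_apply',
      LinearMap.mem_ker.1 hv, LinearMap.zero_apply]
  have hdim := LinearMap.BilinForm.finrank_add_finrank_orthogonal' (B := M.toBilin') U
  rw [finrank_fintype_fun_eq_card] at hdim
  have horth_le := Submodule.finrank_mono horth
  have hradical_le := Submodule.finrank_mono hradical
  lia

variable {n K : Type*} [Fintype n] [DecidableEq n] [Field K]

theorem finrank_ker_mulVecLin_le_one {M : Matrix n n K} (hM : M.adjugate ≠ 0) :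
    finrank K (LinearMap.ker M.mulVecLin) ≤ 1 := by
  obtain ⟨i, j, hij⟩ : ∃ i j, M.adjugate i j ≠ 0 := by
    by_contra! h
    exact hM (Matrix.ext h)
  let coord : LinearMap.ker M.mulVecLin →ₗ[K] K := LinearMap.proj i ∘ₗ Submodule.subtype _
  have hinj : LinearMap.ker coord = ⊥ := LinearMap.ker_eq_bot'.2 fun ⟨y, hy⟩ hyi => by
    rw [LinearMap.mem_ker, mulVecLin_apply] at hy
    have hrow : M.updateRow j (Pi.single i 1) *ᵥ y = 0 := by
      ext a
      rcases eq_or_ne a j with rfl | ha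
      · simpa [mulVec, coord] using hyi
      · simpa [mulVec, updateRow_ne ha] using congrFun hy a
    rw [adjugate_apply] at hij
    simpa using eq_zero_of_mulVec_eq_zero hij hrow
  simpa using LinearMap.finrank_le_finrank_of_injective (LinearMap.ker_eq_bot.1 hinj)

theorem adjugate_eq_zero_of_forall_ne_ne {M : Matrix n n K} (hn : 3 < Fintype.card n) (a : n)
    (hM : ∀ i j, i ≠ a → j ≠ a → M i j = 0) : M.adjugate = 0 := by
  by_contra hadj
  let φ : (n → K) →ₗ[K] K × K := (LinearMap.proj a).prod (LinearMap.proj a ∘ₗ M.mulVecLin)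
  have hφ : LinearMap.ker φ ≤ LinearMap.ker M.mulVecLin := fun y hy => by
    obtain ⟨hya, hMya⟩ : y a = 0 ∧ (M *ᵥ y) a = 0 := by simpa [φ] using hy
    ext i
    rcases eq_or_ne i a with rfl | hi
    · exact hMya
    · refine Finset.sum_eq_zero fun j _ => ?_
      rcases eq_or_ne j a with rfl | hj
      · rw [hya, mul_zero]
      · exact mul_eq_zero_of_left (hM i j hi hj) _
  have hker := (Submodule.finrank_mono hφ).trans (finrank_ker_mulVecLin_le_one hadj)
  have hrange : finrank K (LinearMap.range φ) ≤ 2 := by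
    simpa using (LinearMap.range φ).finrank_le
  have hnullity := φ.finrank_range_add_finrank_ker
  rw [finrank_fintype_fun_eq_card] at hnullity
  lia

-- The `c m` are the coefficients of `t ↦ adj (M + t N) e`, a curve of kernel vectors.
theorem exists_kernel_curve [Infinite K] {M N : Matrix n n K}
    (hdet : ∀ t : K, (M + t • N).det = 0) (e : n → K) :
    ∃ c : ℕ → n → K, c 0 = M.adjugate *ᵥ e ∧ M *ᵥ c 0 = 0 ∧
      ∀ m, M *ᵥ c (m + 1) = -(N *ᵥ c m) := by
  let P : Matrix n n (Polynomial K) :=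
    M.map Polynomial.C + (Polynomial.X : Polynomial K) • N.map Polynomial.C
  have hmap : ∀ t, P.map (Polynomial.eval t) = M + t • N := fun t => by
    ext i j
    simp [P, mul_comm t]
  have hP : P.det = 0 := Polynomial.funext fun t => by
    rw [← Polynomial.coe_evalRingHom, RingHom.map_det, RingHom.mapMatrix_apply,
      Polynomial.coe_evalRingHom, hmap, hdet, Polynomial.eval_zero]
  let curve : n → Polynomial K := P.adjugate *ᵥ (Polynomial.C ∘ e)
  have hcurve : P *ᵥ curve = 0 := by
    rw [mulVec_mulVec, mul_adjugate, hP, zero_smul, zero_mulVec]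
  let c (m : ℕ) : n → K := fun i => (curve i).coeff m
  have hc0 : c 0 = M.adjugate *ᵥ e := by
    have hadj : P.adjugate.map (Polynomial.evalRingHom 0) = M.adjugate := by
      rw [← RingHom.mapMatrix_apply, RingHom.map_adjugate, RingHom.mapMatrix_apply,
        Polynomial.coe_evalRingHom, hmap, zero_smul, add_zero]
    ext i
    simp [c, curve, Polynomial.coeff_zero_eq_eval_zero, mulVec, dotProduct, ← hadj]
  have hMc0 : M *ᵥ c 0 = 0 := by
    have hMdet : M.det = 0 := by simpa using hdet 0
    rw [hc0, mulVec_mulVec, mul_adjugate, hMdet, zero_smul, zero_mulVec]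
  refine ⟨c, hc0, hMc0, fun m => ?_⟩
  ext i
  have hcoeff := congrArg (Polynomial.coeff · (m + 1)) (congrFun hcurve i)
  simp only [P, mulVec, dotProduct, Matrix.add_apply, Matrix.smul_apply, map_apply, smul_eq_mul,
    add_mul, mul_assoc, Polynomial.finsetSum_coeff, Polynomial.coeff_add, Polynomial.coeff_C_mul,
    Polynomial.coeff_X_mul, Finset.sum_add_distrib, Pi.zero_apply, Polynomial.coeff_zero]
    at hcoeff
  exact eq_neg_of_add_eq_zero_left hcoeff

theorem exists_mulVec_eq_and_isotropic [Infinite K] {M N : Matrix n n K} (hM : M.IsSymm)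
    (hN : N.IsSymm) (hdet : ∀ t : K, (M + t • N).det = 0) (e : n → K) :
    ∃ x, M *ᵥ x = N *ᵥ (M.adjugate *ᵥ e) ∧ x ⬝ᵥ M *ᵥ x = 0 := by
  obtain ⟨c, hc0, hMc0, hMc⟩ := exists_kernel_curve hdet e
  refine ⟨-c 1, by rw [mulVec_neg, hMc 0, neg_neg, hc0], ?_⟩
  calc -c 1 ⬝ᵥ M *ᵥ -c 1 = -(c 1 ⬝ᵥ N *ᵥ c 0) := by
        rw [mulVec_neg, neg_dotProduct_neg, hMc 0, dotProduct_neg]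
    _ = -(c 0 ⬝ᵥ N *ᵥ c 1) := by rw [dotProduct_mulVec_comm_of_isSymm hN, dotProduct_comm]
    _ = c 0 ⬝ᵥ M *ᵥ c 2 := by rw [hMc 1, dotProduct_neg]
    _ = 0 := by rw [dotProduct_mulVec_comm_of_isSymm hM, hMc0, zero_dotProduct]

theorem two_mul_finrank_map_mulVec_lt [CharZero K] {S : Submodule K (Matrix n n K)}
    (hsymm : ∀ N ∈ S, N.IsSymm) (hdet : ∀ N ∈ S, N.det = 0) {M : Matrix n n K} (hM : M ∈ S)
    {e : n → K} (he : M.adjugate *ᵥ e ≠ 0) :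
    2 * finrank K (S.map ((mulVecBilin K K).flip (M.adjugate *ᵥ e))) < Fintype.card n := by
  set L := S.map ((mulVecBilin K K).flip (M.adjugate *ᵥ e))
  let U := L.comap M.mulVecLin
  have hlift : ∀ y ∈ L, ∃ x, M *ᵥ x = y ∧ x ⬝ᵥ M *ᵥ x = 0 := by
    rintro _ ⟨N, hN, rfl⟩
    exact exists_mulVec_eq_and_isotropic (hsymm M hM) (hsymm N hN)
      (fun t => hdet _ (S.add_mem hM (S.smul_mem t hN))) e
  have hisotropic : ∀ u ∈ U, u ⬝ᵥ M *ᵥ u = 0 := fun u hu => by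
    obtain ⟨x, hxu, hx⟩ := hlift (M *ᵥ u) hu
    rw [← hxu, dotProduct_mulVec_comm_of_isSymm (hsymm M hM), ← hxu, dotProduct_comm, hx]
  have hker_le : finrank K (LinearMap.ker M.mulVecLin) ≤ 1 :=
    finrank_ker_mulVecLin_le_one fun h0 => he (by rw [h0, zero_mulVec])
  have hker_pos : 0 < finrank K (LinearMap.ker M.mulVecLin) := by
    rw [Module.finrank_pos_iff, Submodule.nontrivial_iff_ne_bot]
    refine (Submodule.ne_bot_iff _).2 ⟨_, ?_, he⟩
    rw [LinearMap.mem_ker, mulVecLin_apply, mulVec_mulVec, mul_adjugate, hdet M hM, zero_smul,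
      zero_mulVec]
  have hrank : finrank K U = finrank K L + finrank K (LinearMap.ker M.mulVecLin) :=
    finrank_comap_of_le_range fun y hy => (hlift y hy).imp fun _ hx => hx.1
  have hUdim := two_mul_finrank_le_of_isotropic (hsymm M hM) hisotropic
  lia

end SingularSpaces

section QuaternarySingularSpaces

open Matrix

theorem mem_span_singleton_of_finrank_le_one {K V : Type*} [DivisionRing K] [AddCommGroup V]
    [Module K V] [FiniteDimensional K V] {L : Submodule K V} (hL : Module.finrank K L ≤ 1)
    {v w : V} (hv : v ∈ L) (hv0 : v ≠ 0) (hw : w ∈ L) : w ∈ Submodule.span K {v} := by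
  have hle : Submodule.span K {v} ≤ L := (Submodule.span_singleton_le_iff_mem v L).2 hv
  rw [Submodule.eq_of_le_of_finrank_le hle (by rwa [finrank_span_singleton hv0])]
  exact hw

theorem exists_mem_orthogonalGroup_mul_isUpperTriangular {n : Type*} [Fintype n] [LinearOrder n]
    [LocallyFiniteOrderBot n] (F : Matrix n n ℝ) :
    ∃ O ∈ orthogonalGroup n ℝ, ∃ R : Matrix n n ℝ, R.IsUpperTriangular ∧ F = O * R := by
  let f (j : n) : EuclideanSpace ℝ n := WithLp.toLp 2 (F.col j)
  let std := EuclideanSpace.basisFun n ℝ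
  let b := InnerProductSpace.gramSchmidtOrthonormalBasis (𝕜 := ℝ) finrank_euclideanSpace f
  have hF : F = std.toBasis.toMatrix f := by
    ext i j
    simp [std, f, Module.Basis.toMatrix_apply]
  refine ⟨std.toBasis.toMatrix b, std.toMatrix_orthonormalBasis_mem_orthogonal b,
    b.toBasis.toMatrix f,
    InnerProductSpace.gramSchmidtOrthonormalBasis_inv_isUpperTriangular _ f, ?_⟩
  rw [hF, ← b.coe_toBasis, Module.Basis.toMatrix_mul_toMatrix]

theorem col_dotProduct_col_of_mem_orthogonalGroup {n : Type*} [Fintype n] [DecidableEq n]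
    {O : Matrix n n ℝ} (hO : O ∈ orthogonalGroup n ℝ) (i j : n) :
    O.col i ⬝ᵥ O.col j = (1 : Matrix n n ℝ) i j :=
  congrFun₂ ((mem_orthogonalGroup_iff' n ℝ).1 hO) i j

theorem exists_orthogonal_frame {k x w : Fin 4 → ℝ} (hk : k ≠ 0) (hx : x ∉ Submodule.span ℝ {k})
    (hkw : k ⬝ᵥ w = 0) (hxw : x ⬝ᵥ w = 0) :
    ∃ O ∈ orthogonalGroup (Fin 4) ℝ, (∃ r : ℝ, k = r • O.col 0) ∧
      (∃ s t : ℝ, x = s • O.col 0 + t • O.col 1) ∧ ∃ q : ℝ, w = q • O.col 2 := by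
  obtain ⟨O, hO, R, hR, hOR⟩ :=
    exists_mem_orthogonalGroup_mul_isUpperTriangular (of ![k, x, w, 0])ᵀ
  have hcol : ∀ j, ![k, x, w, 0] j = ∑ i, R i j • O.col i := fun j => by
    ext a
    simpa [mul_apply, mul_comm] using congrFun₂ hOR a j
  have hlow : ∀ {i j}, j < i → R i j = 0 := fun hji => hR hji
  have hk' : k = R 0 0 • O.col 0 := by
    simpa [Fin.sum_univ_four, hlow] using hcol 0
  have hx' : x = R 0 1 • O.col 0 + R 1 1 • O.col 1 := by
    simpa [Fin.sum_univ_four, hlow] using hcol 1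
  have hw' : w = R 0 2 • O.col 0 + R 1 2 • O.col 1 + R 2 2 • O.col 2 := by
    simpa [Fin.sum_univ_four, hlow] using hcol 2
  have hortho := col_dotProduct_col_of_mem_orthogonalGroup hO
  have hR00 : R 0 0 ≠ 0 := fun h0 => hk (by rw [hk', h0, zero_smul])
  have hR11 : R 1 1 ≠ 0 := fun h0 => hx <| Submodule.mem_span_singleton.2
    ⟨R 0 1 / R 0 0, by rw [hx', h0, hk', smul_smul, div_mul_cancel₀ _ hR00, zero_smul, add_zero]⟩
  have hR02 : R 0 2 = 0 := by
    simpa [hk', hw', hortho, hR00] using hkw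
  have hR12 : R 1 2 = 0 := by
    simpa [hx', hw', hortho, hR11, hR02] using hxw
  exact ⟨O, hO, ⟨_, hk'⟩, ⟨_, _, hx'⟩, ⟨R 2 2, by simpa [hR02, hR12] using hw'⟩⟩

theorem sq_eq_mul_of_row_zero {S : Submodule ℝ (Matrix (Fin 4) (Fin 4) ℝ)}
    (hsymm : ∀ N ∈ S, N.IsSymm) (hdet : ∀ N ∈ S, N.det = 0)
    (hrow : ∀ N ∈ S, ∀ j, j ≠ 2 → N 0 j = 0) {N₁ : Matrix (Fin 4) (Fin 4) ℝ} (hN₁ : N₁ ∈ S)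
    (hN₁0 : N₁ 0 2 ≠ 0) {N : Matrix (Fin 4) (Fin 4) ℝ} (hN : N ∈ S) :
    N 1 3 ^ 2 = N 1 1 * N 3 3 := by
  have hdense : ∀ N ∈ S, N 0 2 ≠ 0 → N 1 3 ^ 2 = N 1 1 * N 3 3 := fun N hN hN0 => by
    have hcol : ∀ j, j ≠ 2 → N j 0 = 0 := fun j hj => by rw [(hsymm N hN).apply, hrow N hN j hj]
    have hexpand : N.det = N 0 2 ^ 2 * (N 1 3 ^ 2 - N 1 1 * N 3 3) := by
      simp [det_succ_row_zero, Fin.sum_univ_succ, Fin.succAbove, hrow N hN, hcol,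
        (hsymm N hN).apply 0 2, (hsymm N hN).apply 1 3]
      ring
    rw [hdet N hN, zero_eq_mul, or_iff_right (pow_ne_zero 2 hN0), sub_eq_zero] at hexpand
    exact hexpand
  by_cases hN0 : N 0 2 = 0
  · have hadd := hdense (N + N₁) (S.add_mem hN hN₁) (by simpa [hN0] using hN₁0)
    have hsub := hdense (N - N₁) (S.sub_mem hN hN₁) (by simpa [hN0] using hN₁0)
    have hone := hdense N₁ hN₁ hN₁0
    simp only [Matrix.add_apply, Matrix.sub_apply] at hadd hsub
    linear_combination (hadd + hsub) / 2 - hone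
  · exact hdense N hN hN0

theorem row_one_eq_zero_of_row_zero {S : Submodule ℝ (Matrix (Fin 4) (Fin 4) ℝ)}
    (hsymm : ∀ N ∈ S, N.IsSymm) (hdet : ∀ N ∈ S, N.det = 0)
    (hrow : ∀ N ∈ S, ∀ j, j ≠ 2 → N 0 j = 0) {N₁ : Matrix (Fin 4) (Fin 4) ℝ} (hN₁ : N₁ ∈ S)
    (hN₁0 : N₁ 0 2 ≠ 0) {M : Matrix (Fin 4) (Fin 4) ℝ} (hM : M ∈ S) (hMadj : M.adjugate ≠ 0)
    (hMrow : ∀ j, j ≠ 2 → M 1 j = 0) {N : Matrix (Fin 4) (Fin 4) ℝ} (hN : N ∈ S) {j : Fin 4}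
    (hj : j ≠ 2) : N 1 j = 0 := by
  have hidx : ∀ i : Fin 4, i ≠ 2 → i = 0 ∨ i = 1 ∨ i = 3 := by decide
  have hM33 : M 3 3 ≠ 0 := fun hM33 => hMadj <|
    adjugate_eq_zero_of_forall_ne_ne (by simp) 2 fun i j hi hj => by
      rcases hidx i hi with rfl | rfl | rfl
      · exact hrow M hM j hj
      · exact hMrow j hj
      · rcases hidx j hj with rfl | rfl | rfl
        · rw [(hsymm M hM).apply, hrow M hM 3 (by decide)]
        · rw [(hsymm M hM).apply, hMrow 3 (by decide)]
        · exact hM33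
  have hsq := sq_eq_mul_of_row_zero hsymm hdet hrow hN₁ hN₁0 hN
  have hsq_add := sq_eq_mul_of_row_zero hsymm hdet hrow hN₁ hN₁0 (S.add_mem hN hM)
  rw [Matrix.add_apply, Matrix.add_apply, Matrix.add_apply, hMrow 1 (by decide),
    hMrow 3 (by decide), add_zero, add_zero] at hsq_add
  have h11 : N 1 1 = 0 := by
    have : N 1 1 * M 3 3 = 0 := by linear_combination hsq - hsq_add
    simpa [hM33] using this
  have h13 : N 1 3 = 0 := by simpa [h11] using hsq
  have h10 : N 1 0 = 0 := by rw [(hsymm N hN).apply, hrow N hN 1 (by decide)]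
  rcases hidx j hj with rfl | rfl | rfl
  exacts [h10, h11, h13]

theorem transpose_mul_mul_apply_of_isSymm {n R : Type*} [Fintype n] [CommSemiring R]
    {N : Matrix n n R} (hN : N.IsSymm) (O : Matrix n n R) (i j : n) :
    (Oᵀ * N * O) i j = N *ᵥ O.col i ⬝ᵥ O.col j :=
  (mul_mul_apply _ _ _ i j).trans (dotProduct_mulVec_comm_of_isSymm hN _ _)

theorem isSymm_transpose_mul_mul {n R : Type*} [Fintype n] [CommSemiring R] {N : Matrix n n R}
    (hN : N.IsSymm) (O : Matrix n n R) : (Oᵀ * N * O).IsSymm := by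
  rw [IsSymm, transpose_mul, transpose_mul, transpose_transpose, hN, mul_assoc]

theorem exists_orthogonal_row_zero_of_mulVec_eq_zero {m : ℕ}
    {S : Set (Matrix (Fin (m + 1)) (Fin (m + 1)) ℝ)} (hsymm : ∀ N ∈ S, N.IsSymm)
    {k : Fin (m + 1) → ℝ} (hk : k ≠ 0) (hSk : ∀ N ∈ S, N *ᵥ k = 0) :
    ∃ O ∈ orthogonalGroup (Fin (m + 1)) ℝ, ∀ N ∈ S, ∀ j, (Oᵀ * N * O) 0 j = 0 := by
  obtain ⟨O, hO, R, hR, hOR⟩ := exists_mem_orthogonalGroup_mul_isUpperTriangular (of fun i _ => k i)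
  have hkO : k = R 0 0 • O.col 0 := by
    ext i
    have hki : k i = (O * R) i 0 := congrFun₂ hOR i 0
    rw [hki, mul_apply, Finset.sum_eq_single 0 (fun j _ hj => by
      rw [hR (Fin.pos_iff_ne_zero.2 hj), mul_zero]) (by simp), mul_comm]
    rfl
  have hR00 : R 0 0 ≠ 0 := fun h0 => hk (by rw [hkO, h0, zero_smul])
  refine ⟨O, hO, fun N hN j => ?_⟩
  have hNO : N *ᵥ O.col 0 = 0 := by simpa [hkO, mulVec_smul, hR00] using hSk N hN
  rw [transpose_mul_mul_apply_of_isSymm (hsymm N hN), hNO, zero_dotProduct]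

theorem transpose_mul_mul_apply_eq_zero {n : Type*} [Fintype n] [DecidableEq n]
    {O N : Matrix n n ℝ} (hO : O ∈ orthogonalGroup n ℝ) (hN : N.IsSymm) {i l j : n}
    (hil : N *ᵥ O.col i ∈ Submodule.span ℝ {O.col l}) (hj : j ≠ l) : (Oᵀ * N * O) i j = 0 := by
  obtain ⟨a, ha⟩ := Submodule.mem_span_singleton.1 hil
  rw [transpose_mul_mul_apply_of_isSymm hN, ← ha, smul_dotProduct,
    col_dotProduct_col_of_mem_orthogonalGroup hO, one_apply_ne hj.symm, smul_zero]

theorem adjugate_transpose_mul_mul_ne_zero {n : Type*} [Fintype n] [DecidableEq n]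
    {O M : Matrix n n ℝ} (hO : O ∈ orthogonalGroup n ℝ) (hM : M.adjugate ≠ 0) :
    (Oᵀ * M * O).adjugate ≠ 0 := fun h0 => hM <| by
  have hOO : O * Oᵀ = 1 := (mem_orthogonalGroup_iff n ℝ).1 hO
  have hconj : M = O * (Oᵀ * M * O) * Oᵀ := by
    simp only [mul_assoc, hOO, mul_one, ← mul_assoc O Oᵀ, one_mul]
  rw [hconj, adjugate_mul_distrib, adjugate_mul_distrib, h0, zero_mul, mul_zero]

theorem two_rows_zero_of_mulVec_col {S : Submodule ℝ (Matrix (Fin 4) (Fin 4) ℝ)}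
    (hsymm : ∀ N ∈ S, N.IsSymm) (hdet : ∀ N ∈ S, N.det = 0) {M N₁ : Matrix (Fin 4) (Fin 4) ℝ}
    (hM : M ∈ S) (hMadj : M.adjugate ≠ 0) (hN₁ : N₁ ∈ S) {O : Matrix (Fin 4) (Fin 4) ℝ}
    (hO : O ∈ orthogonalGroup (Fin 4) ℝ)
    (hcol0 : ∀ N ∈ S, N *ᵥ O.col 0 ∈ Submodule.span ℝ {O.col 2}) (hN₁col0 : N₁ *ᵥ O.col 0 ≠ 0)
    (hMcol1 : M *ᵥ O.col 1 ∈ Submodule.span ℝ {O.col 2}) {N : Matrix (Fin 4) (Fin 4) ℝ}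
    (hN : N ∈ S) {i j : Fin 4} (hi : i < 2) (hj : j ≠ 2) : (Oᵀ * N * O) i j = 0 := by
  let T := S.map (LinearMap.mulLeftRight ℝ (Oᵀ, O))
  have hT : ∀ N ∈ S, Oᵀ * N * O ∈ T := fun N hN => Submodule.mem_map_of_mem hN
  have hTsymm : ∀ N ∈ T, N.IsSymm := by
    rintro _ ⟨N, hN, rfl⟩
    exact isSymm_transpose_mul_mul (hsymm N hN) O
  have hTdet : ∀ N ∈ T, N.det = 0 := by
    rintro _ ⟨N, hN, rfl⟩
    simp [det_mul, hdet N hN]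
  have hTrow : ∀ N ∈ T, ∀ j, j ≠ 2 → N 0 j = 0 := by
    rintro _ ⟨N, hN, rfl⟩ j hj
    exact transpose_mul_mul_apply_eq_zero hO (hsymm N hN) (hcol0 N hN) hj
  have hN₁02 : (Oᵀ * N₁ * O) 0 2 ≠ 0 := by
    obtain ⟨a, ha⟩ := Submodule.mem_span_singleton.1 (hcol0 N₁ hN₁)
    rw [transpose_mul_mul_apply_of_isSymm (hsymm N₁ hN₁), ← ha, smul_dotProduct,
      col_dotProduct_col_of_mem_orthogonalGroup hO, one_apply_eq, smul_eq_mul, mul_one]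
    rintro rfl
    exact hN₁col0 (by rw [← ha, zero_smul])
  obtain rfl | rfl : i = 0 ∨ i = 1 := by lia
  · exact hTrow _ (hT N hN) j hj
  · exact row_one_eq_zero_of_row_zero hTsymm hTdet hTrow (hT N₁ hN₁) hN₁02 (hT M hM)
      (adjugate_transpose_mul_mul_ne_zero hO hMadj)
      (fun j hj => transpose_mul_mul_apply_eq_zero hO (hsymm M hM) hMcol1 hj) (hT N hN) hj

theorem exists_orthogonal_two_rows_zero {S : Submodule ℝ (Matrix (Fin 4) (Fin 4) ℝ)}
    (hsymm : ∀ N ∈ S, N.IsSymm) (hdet : ∀ N ∈ S, N.det = 0) {M N₁ : Matrix (Fin 4) (Fin 4) ℝ}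
    (hM : M ∈ S) (hMadj : M.adjugate ≠ 0) (hN₁ : N₁ ∈ S) {k x : Fin 4 → ℝ} (hMk : M *ᵥ k = 0)
    (hN₁k : N₁ *ᵥ k ≠ 0) (hline : ∀ N ∈ S, N *ᵥ k ∈ Submodule.span ℝ {N₁ *ᵥ k})
    (hMx : M *ᵥ x = N₁ *ᵥ k) (hx : x ⬝ᵥ M *ᵥ x = 0) :
    ∃ O ∈ orthogonalGroup (Fin 4) ℝ,
      ∀ N ∈ S, ∀ i j, i < 2 → j ≠ 2 → (Oᵀ * N * O) i j = 0 := by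
  have hk0 : k ≠ 0 := fun h0 => hN₁k (by rw [h0, mulVec_zero])
  have hxk : x ∉ Submodule.span ℝ {k} := fun hmem => by
    obtain ⟨a, rfl⟩ := Submodule.mem_span_singleton.1 hmem
    rw [mulVec_smul, hMk, smul_zero] at hMx
    exact hN₁k hMx.symm
  have hkw : k ⬝ᵥ M *ᵥ x = 0 := by
    rw [dotProduct_mulVec_comm_of_isSymm (hsymm M hM), hMk, zero_dotProduct]
  obtain ⟨O, hO, ⟨r, hkO⟩, ⟨s, t, hxO⟩, q, hwO⟩ := exists_orthogonal_frame hk0 hxk hkw hx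
  have hr : r ≠ 0 := fun h0 => hk0 (by rw [hkO, h0, zero_smul])
  have ht : t ≠ 0 := fun h0 => hxk (Submodule.mem_span_singleton.2
    ⟨s / r, by rw [hkO, smul_smul, div_mul_cancel₀ _ hr, hxO, h0, zero_smul, add_zero]⟩)
  have hO0 : O.col 0 = r⁻¹ • k := by rw [hkO, inv_smul_smul₀ hr]
  have hO1 : O.col 1 = t⁻¹ • (x - (s * r⁻¹) • k) := by
    rw [mul_smul, ← hO0, hxO, add_sub_cancel_left, inv_smul_smul₀ ht]
  have hspan : Submodule.span ℝ {N₁ *ᵥ k} ≤ Submodule.span ℝ {O.col 2} := by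
    rw [Submodule.span_singleton_le_iff_mem, ← hMx, hwO]
    exact Submodule.smul_mem _ _ (Submodule.mem_span_singleton_self _)
  have hcol0 : ∀ N ∈ S, N *ᵥ O.col 0 ∈ Submodule.span ℝ {O.col 2} := fun N hN => by
    rw [hO0, mulVec_smul]
    exact Submodule.smul_mem _ _ (hspan (hline N hN))
  have hN₁col0 : N₁ *ᵥ O.col 0 ≠ 0 := by
    rw [hO0, mulVec_smul]
    exact smul_ne_zero (inv_ne_zero hr) hN₁k
  have hMcol1 : M *ᵥ O.col 1 ∈ Submodule.span ℝ {O.col 2} := by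
    rw [hO1, mulVec_smul, mulVec_sub, mulVec_smul, hMk, hMx, smul_zero, sub_zero]
    exact Submodule.smul_mem _ _ (hspan (Submodule.mem_span_singleton_self _))
  exact ⟨O, hO, fun N hN i j hi hj =>
    two_rows_zero_of_mulVec_col hsymm hdet hM hMadj hN₁ hO hcol0 hN₁col0 hMcol1 hN hi hj⟩

theorem exists_orthogonal_row_zero_or {S : Submodule ℝ (Matrix (Fin 4) (Fin 4) ℝ)}
    (hsymm : ∀ N ∈ S, N.IsSymm) (hdet : ∀ N ∈ S, N.det = 0) {M : Matrix (Fin 4) (Fin 4) ℝ}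
    (hM : M ∈ S) (hMadj : M.adjugate ≠ 0) :
    ∃ O ∈ orthogonalGroup (Fin 4) ℝ,
      (∀ N ∈ S, ∀ j, (Oᵀ * N * O) 0 j = 0) ∨
      ∀ N ∈ S, ∀ i j, i < 2 → j ≠ 2 → (Oᵀ * N * O) i j = 0 := by
  obtain ⟨e, he⟩ : ∃ e, M.adjugate *ᵥ e ≠ 0 := by
    by_contra! h
    exact hMadj (Matrix.ext_of_mulVec_single fun i => by rw [h, zero_mulVec])
  by_cases hSk : ∀ N ∈ S, N *ᵥ (M.adjugate *ᵥ e) = 0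
  · exact (exists_orthogonal_row_zero_of_mulVec_eq_zero hsymm he hSk).imp fun O hO =>
      ⟨hO.1, .inl hO.2⟩
  · push Not at hSk
    obtain ⟨N₁, hN₁, hN₁k⟩ := hSk
    obtain ⟨x, hMx, hx⟩ := exists_mulVec_eq_and_isotropic (hsymm M hM) (hsymm N₁ hN₁)
      (fun t => hdet _ (S.add_mem hM (S.smul_mem t hN₁))) e
    have hMk : M *ᵥ (M.adjugate *ᵥ e) = 0 := by
      rw [mulVec_mulVec, mul_adjugate, hdet M hM, zero_smul, zero_mulVec]
    have hline : ∀ N ∈ S, N *ᵥ (M.adjugate *ᵥ e) ∈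
        Submodule.span ℝ {N₁ *ᵥ (M.adjugate *ᵥ e)} := fun N hN => by
      have hdim := two_mul_finrank_map_mulVec_lt hsymm hdet hM he
      rw [Fintype.card_fin] at hdim
      exact mem_span_singleton_of_finrank_le_one
        (L := S.map ((mulVecBilin ℝ ℝ).flip (M.adjugate *ᵥ e))) (by lia)
        (Submodule.mem_map_of_mem hN₁) hN₁k (Submodule.mem_map_of_mem hN)
    exact (exists_orthogonal_two_rows_zero hsymm hdet hM hMadj hN₁ hMk hN₁k hline hMx hx).imp
      fun O hO => ⟨hO.1, .inr hO.2⟩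

end QuaternarySingularSpaces

section DeterminantalCubics

open Matrix

theorem det_add_smul_one_fin_four {R : Type*} [CommRing R] (N : Matrix (Fin 4) (Fin 4) R)
    (r : R) : (N + r • 1).det = r ^ 2 * (r ^ 2 + r * N.trace +
      ∑ i, ∑ j ∈ Finset.Ioi i, (N i i * N j j - N i j * N j i)) +
      r * N.adjugate.trace + N.det := by
  have h0 : Finset.Ioi (0 : Fin 4) = {1, 2, 3} := rfl
  simp [trace, adjugate_fin_succ_eq_det_submatrix, det_succ_row_zero, Fin.sum_univ_succ,
    Fin.succAbove, h0, one_apply]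
  ring

section SmoothnessObstructions

variable {σ R K : Type*} [Fintype σ] [CommRing R] [IsDomain R] [Field K] [IsAlgClosed K]
  [Algebra R K] {l : σ → R} {F : MvPolynomial σ R} {A : σ → Matrix (Fin 4) (Fin 4) R}

theorem exists_isSingularAt_of_adjugate_eq_zero (hσ : 2 < Fintype.card σ) (hl : linForm l ≠ 0)
    (hdet : (pencil fun k => A k - l k • 1).det = 0)
    (hadj : (pencil fun k => A k - l k • 1).adjugate = 0)
    (hF : linForm l * F = (pencil A).det) : ∃ p : σ → K, p ≠ 0 ∧ IsSingularAt F p := by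
  set N := pencil fun k => A k - l k • 1 with hN
  let Q := linForm l ^ 2 + linForm l * N.trace +
    ∑ i, ∑ j ∈ Finset.Ioi i, (N i i * N j j - N i j * N j i)
  have hA : pencil A = N + linForm l • 1 := by rw [hN, pencil_sub_smul_one, sub_add_cancel]
  have hdetQ : (pencil A).det = linForm l ^ 2 * Q := by
    rw [hA, det_add_smul_one_fin_four, hadj, hdet, trace_zero, mul_zero, add_zero, add_zero]
  have hFQ : F = linForm l * Q :=
    mul_left_cancel₀ hl (by rw [hF, hdetQ, ← mul_assoc, ← sq])
  have hlhom := isHomogeneous_linForm l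
  have hNhom (i j) : (N i j).IsHomogeneous 1 := isHomogeneous_pencil_apply _ i j
  have hQ : Q.IsHomogeneous 2 :=
    ((hlhom.pow 2).add (hlhom.mul (.sum _ _ _ fun i _ => hNhom i i))).add <|
      .sum _ _ _ fun i _ => .sum _ _ _ fun j _ =>
        ((hNhom i i).mul (hNhom j j)).sub ((hNhom i j).mul (hNhom j i))
  obtain ⟨p, hp0, hlp, hQp⟩ :=
    exists_ne_zero_aeval_eq_zero_of_linForm (K := K) two_ne_zero hQ (fun _ : Unit => l) (by simpa)
  exact ⟨p, hp0, hFQ ▸ .mul_of_aeval_eq_zero (hlp ()) hQp⟩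

theorem exists_isSingularAt_of_row_zero (h2 : (2 : K) ≠ 0) (hσ : 3 < Fintype.card σ)
    (hl : linForm l ≠ 0) (hA : ∀ k, (A k).IsSymm) (hrow : ∀ k j, (A k - l k • 1) 0 j = 0)
    (hF : linForm l * F = (pencil A).det) : ∃ p : σ → K, p ≠ 0 ∧ IsSingularAt F p := by
  have hA0 (j) := pencil_apply_of_sub_smul_one_eq_zero (hrow · j)
  have hFdet : F = (pencil fun k => (A k).submatrix Fin.succ Fin.succ).det := by
    refine mul_left_cancel₀ hl ?_
    rw [hF, ← submatrix_pencil, det_succ_row_zero]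
    simp [hA0, Fin.sum_univ_succ]
  rw [hFdet]
  exact exists_isSingularAt_det_pencil_fin_three h2 hσ fun k => (hA k).submatrix _

theorem exists_isSingularAt_of_two_rows_zero (hσ : 3 < Fintype.card σ)
    (hl : linForm l ≠ 0) (hA : ∀ k, (A k).IsSymm)
    (hrows : ∀ k i j, i < 2 → j ≠ 2 → (A k - l k • 1) i j = 0)
    (hF : linForm l * F = (pencil A).det) : ∃ p : σ → K, p ≠ 0 ∧ IsSingularAt F p := by
  set M := pencil A with hM
  have hMapply : ∀ i j, i < 2 → j ≠ 2 → M i j = linForm l * (1 : Matrix _ _ _) i j :=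
    fun i j hi hj => pencil_apply_of_sub_smul_one_eq_zero (hrows · i j hi hj)
  have hMsymm : ∀ i j, M i j = M j i := fun i j => (pencil_isSymm hA).apply j i
  have hMhom (i j) : (M i j).IsHomogeneous 1 := isHomogeneous_pencil_apply A i j
  let q := linForm l * M 2 2 - M 0 2 ^ 2 - M 1 2 ^ 2
  have hFq : F = M 3 3 * q - linForm l * (M 2 3 * M 2 3) := by
    refine mul_left_cancel₀ hl ?_
    rw [hF]
    simp [det_succ_row_zero, Fin.sum_univ_succ, Fin.succAbove, hMapply, hMsymm 2 0, hMsymm 2 1,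
      hMsymm 3, q]
    ring
  have hq : q.IsHomogeneous 2 :=
    (((isHomogeneous_linForm l).mul (hMhom 2 2)).sub ((hMhom 0 2).pow 2)).sub ((hMhom 1 2).pow 2)
  obtain ⟨p, hp0, hlin, hqp⟩ := exists_ne_zero_aeval_eq_zero_of_linForm (K := K) two_ne_zero hq
    ![fun k => A k 3 3, fun k => A k 2 3] (by simpa)
  have h33 : aeval p (M 3 3) = 0 := by simpa [hM, pencil_apply] using hlin 0
  have h23 : aeval p (M 2 3) = 0 := by simpa [hM, pencil_apply] using hlin 1
  exact ⟨p, hp0, hFq ▸ .sub (.mul_of_aeval_eq_zero h33 hqp)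
    (.mul_left _ (.mul_of_aeval_eq_zero h23 h23))⟩

end SmoothnessObstructions

theorem det_sum_smul_sub_smul_one_eq_zero {σ n R : Type*} [Fintype σ] [Fintype n] [DecidableEq n]
    [CommRing R] {A : σ → Matrix n n R} {l e : σ → R} {F : MvPolynomial σ R}
    (he : ∑ k, e k • A k = 1) (hle : l ⬝ᵥ e = 1) (hF : linForm l * F = (pencil A).det) (p : σ → R) :
    (∑ k, p k • (A k - l k • 1)).det = 0 := by
  have hN : ∑ k, p k • (A k - l k • 1) = ∑ k, (p - (l ⬝ᵥ p) • e) k • A k := by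
    simp only [smul_sub, Finset.sum_sub_distrib, Pi.sub_apply, Pi.smul_apply, sub_smul,
      smul_assoc, ← Finset.smul_sum, he]
    simp only [smul_smul, ← Finset.sum_smul, dotProduct, mul_comm]
  rw [hN, ← eval_det_pencil, ← hF, map_mul, eval_linForm, dotProduct_sub, dotProduct_smul, hle,
    smul_eq_mul, mul_one, sub_self, zero_mul]

theorem transpose_mul_sub_smul_one_mul {n : Type*} [Fintype n] [DecidableEq n] {O : Matrix n n ℝ}
    (hO : O ∈ orthogonalGroup n ℝ) (M : Matrix n n ℝ) (c : ℝ) :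
    Oᵀ * (M - c • 1) * O = Oᵀ * M * O - c • 1 := by
  have hOO : Oᵀ * O = 1 := (mem_orthogonalGroup_iff' n ℝ).1 hO
  rw [mul_sub, sub_mul, Matrix.mul_smul, Matrix.smul_mul, mul_one, hOO]

theorem det_pencil_conj_of_mem_orthogonalGroup {σ n : Type*} [Fintype σ] [Fintype n]
    [DecidableEq n] {O : Matrix n n ℝ} (hO : O ∈ orthogonalGroup n ℝ) (A : σ → Matrix n n ℝ) :
    (pencil fun k => Oᵀ * A k * O).det = (pencil A).det := by
  have hdetO : O.det ^ 2 = 1 := by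
    simpa [sq] using congrArg det ((mem_orthogonalGroup_iff' n ℝ).1 hO)
  rw [det_pencil_conj, hdetO, C_1, one_mul]

theorem exists_isSingularAt_of_linForm_mul_eq_det {σ : Type*} [Fintype σ]
    (hσ : 3 < Fintype.card σ) {A : σ → Matrix (Fin 4) (Fin 4) ℝ} {l e : σ → ℝ}
    {F : MvPolynomial σ ℝ} (hA : ∀ k, (A k).IsSymm) (he : ∑ k, e k • A k = 1)
    (hle : l ⬝ᵥ e = 1) (hF : linForm l * F = (pencil A).det) :
    ∃ p : σ → ℂ, p ≠ 0 ∧ IsSingularAt F p := by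
  have hl : linForm l ≠ 0 := fun h0 => by
    simpa [h0, hle] using eval_linForm e l
  let N (k : σ) := A k - l k • (1 : Matrix (Fin 4) (Fin 4) ℝ)
  let S := LinearMap.range (Fintype.linearCombination ℝ N)
  have hNS : ∀ k, N k ∈ S := fun k => by
    classical exact ⟨Pi.single k 1, by simp⟩
  have hsymm : ∀ M ∈ S, M.IsSymm := by
    rintro _ ⟨p, rfl⟩
    simp [Fintype.linearCombination_apply, IsSymm, transpose_sum, N, (hA _).eq]
  have hdet : ∀ M ∈ S, M.det = 0 := by
    rintro _ ⟨p, rfl⟩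
    exact det_sum_smul_sub_smul_one_eq_zero he hle hF p
  by_cases hadj : ∀ M ∈ S, M.adjugate = 0
  · exact exists_isSingularAt_of_adjugate_eq_zero (by lia) hl
      (det_pencil_eq_zero fun p => hdet _ ⟨p, rfl⟩)
      (adjugate_pencil_eq_zero fun p => hadj _ ⟨p, rfl⟩) hF
  · push Not at hadj
    obtain ⟨M, hM, hMadj⟩ := hadj
    obtain ⟨O, hO, hrows⟩ := exists_orthogonal_row_zero_or hsymm hdet hM hMadj
    have hN : ∀ k, Oᵀ * N k * O = Oᵀ * A k * O - l k • 1 := fun k =>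
      transpose_mul_sub_smul_one_mul hO (A k) (l k)
    have hA' : ∀ k, (Oᵀ * A k * O).IsSymm := fun k => isSymm_transpose_mul_mul (hA k) O
    have hF' : linForm l * F = (pencil fun k => Oᵀ * A k * O).det := by
      rw [det_pencil_conj_of_mem_orthogonalGroup hO, hF]
    rcases hrows with hrow | hrows
    · exact exists_isSingularAt_of_row_zero two_ne_zero hσ hl hA'
        (fun k j => by rw [← hN, hrow _ (hNS k)]) hF'
    · exact exists_isSingularAt_of_two_rows_zero hσ hl hA'
        (fun k i j hi hj => by rw [← hN, hrows _ (hNS k) i j hi hj]) hF'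

theorem exists_transpose_mul_mul_eq_one {n : Type*} [Fintype n] [DecidableEq n]
    {M : Matrix n n ℝ} (hM : M.PosDef) : ∃ P : Matrix n n ℝ, Pᵀ * M * P = 1 := by
  open scoped MatrixOrder in
  obtain ⟨B, hB⟩ := CStarAlgebra.nonneg_iff_eq_star_mul_self.1 hM.posSemidef.nonneg
  have hBdet : IsUnit B.det := by
    have := hM.det_pos.ne'
    simpa [hB, star_eq_conjTranspose] using this
  refine ⟨B⁻¹, ?_⟩
  rw [hB, star_eq_conjTranspose, conjTranspose_eq_transpose_of_trivial, mul_assoc, mul_assoc,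
    mul_nonsing_inv _ hBdet, mul_one, ← transpose_mul, mul_nonsing_inv _ hBdet, transpose_one]

end DeterminantalCubics

theorem stmt_19_general {σ : Type*} [Fintype σ] (hσ : 4 ≤ Fintype.card σ) (F : MvPolynomial σ ℝ)
    (hsmooth : ¬ ∃ p : σ → ℂ, p ≠ 0 ∧ IsSingularAt F p) :
    ¬ ∃ (l e : σ → ℝ) (A : σ → Matrix (Fin 4) (Fin 4) ℝ),
      (∀ k, (A k).IsSymm) ∧ (∑ k, e k • A k).PosDef ∧ linForm l * F = (pencil A).det := by
  rintro ⟨l, e, A, hA, hpos, hF⟩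
  obtain ⟨P, hP⟩ := exists_transpose_mul_mul_eq_one hpos
  have hPdet : P.det ≠ 0 := fun h0 => by simpa [h0] using congrArg Matrix.det hP
  have hle : l ⬝ᵥ e ≠ 0 := fun h0 => hpos.det_pos.ne' <| by
    rw [← eval_det_pencil, ← hF, map_mul, eval_linForm, h0, zero_mul]
  have hB : ∑ k, e k • (P.transpose * A k * P) = 1 := by
    simpa [Matrix.mul_sum, Matrix.sum_mul] using hP
  have hc : (l ⬝ᵥ e)⁻¹ * (l ⬝ᵥ e) = 1 := inv_mul_cancel₀ hle
  have hBF : linForm ((l ⬝ᵥ e)⁻¹ • l) * (C ((l ⬝ᵥ e) * P.det ^ 2) * F) =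
      (pencil fun k => P.transpose * A k * P).det := by
    have hC : C (l ⬝ᵥ e)⁻¹ * C (l ⬝ᵥ e) = (1 : MvPolynomial σ ℝ) := by rw [← C_mul, hc, C_1]
    rw [linForm_smul, det_pencil_conj, ← hF, C_mul]
    linear_combination C (P.det ^ 2) * linForm l * F * hC
  obtain ⟨p, hp0, hp⟩ := exists_isSingularAt_of_linForm_mul_eq_det hσ
    (fun k => isSymm_transpose_mul_mul (hA k) P) hB (by rw [smul_dotProduct, smul_eq_mul, hc]) hBF
  exact hsmooth ⟨p, hp0, hp.of_C_mul (mul_ne_zero hle (pow_ne_zero 2 hPdet))⟩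

/-- for a cubic `f` with smooth projective closure, there is no
identity `l · f^h = det(A₀w + A₁x + A₂y + A₃z)` with symmetric `4×4` matrices
and `A₀` positive definite. -/
theorem stmt_19 (f : MvPolynomial (Fin 3) ℝ) (hdeg : f.totalDegree = 3)
    (F : MvPolynomial (Fin 4) ℝ) (hFhom : F.IsHomogeneous 3)
    (hFdehom : ∀ x y z : ℝ, eval ![(1 : ℝ), x, y, z] F = eval ![x, y, z] f)
    (hsmooth : ¬ ∃ p : Fin 4 → ℂ, p ≠ 0 ∧ aeval p F = 0 ∧
      ∀ i, aeval p (pderiv i F) = 0) :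
    ¬ ∃ (l : Fin 4 → ℝ) (A : Fin 4 → Matrix (Fin 4) (Fin 4) ℝ),
      (∀ k, (A k).IsSymm) ∧ (A 0).PosDef ∧
      (∑ i, C (l i) * X i) * F =
        (∑ i : Fin 4, (X i : MvPolynomial (Fin 4) ℝ) • (A i).map C).det := by
  rintro ⟨l, A, hA, hpos, hF⟩
  exact stmt_19_general (by simp) F hsmooth ⟨l, Pi.single 0 1, A, hA, by simpa using hpos, hF⟩
end
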